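/- Let d ≥ 2, α ∈ (1,2), T > 0, and for 0 < t ≤ T define p_t(x) = (2π)^{−d} ∫_{ℝ^d} cos(⟨x,u⟩) e^{−tΨ(u)} du, where Ψ(u) = ∫_{|y|≤1} (1 − cos(⟨u,y⟩)) |y|^{−(d+α)} dy. Then for each 0 < t ≤ T the function p_t is twice continuously differentiable, each second partial derivative ∂²p_t/∂x_i∂x_j belongs to L¹(ℝ^d), and there exists a constant C < ∞ (depending only on d, α, T) such that ‖∂²p_t/∂x_i∂x_j‖_{L¹(ℝ^d)} ≤ C t^{−2/α} for all 0 < t ≤ T and all i, j = 1,…,d. -/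

import Mathlib

open MeasureTheory Metric
open scoped RealInnerProductSpace

/-- Characteristic exponent of the truncated `α`-stable process. -/
noncomputable def Psi (d : ℕ) (α : ℝ) (u : EuclideanSpace ℝ (Fin d)) : ℝ :=
  ∫ y in Metric.closedBall (0 : EuclideanSpace ℝ (Fin d)) 1,
    (1 - Real.cos ⟪u, y⟫) / ‖y‖ ^ ((d : ℝ) + α)

/-- Transition density of the truncated `α`-stable process, via Fourier inversion. -/
noncomputable def pdens (d : ℕ) (α : ℝ) (t : ℝ) (x : EuclideanSpace ℝ (Fin d)) : ℝ :=
  ((2 * Real.pi) ^ d)⁻¹ *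
    ∫ u : EuclideanSpace ℝ (Fin d), Real.cos ⟪x, u⟫ * Real.exp (-t * Psi d α u)

/-!
Let `ν = |y|^(-(d+α)) dy`. The full exponent `∫ (1 - cos ⟪u, y⟫) dν` is rotation invariant and
homogeneous, hence equals `A |u|^α` with `A > 0`. The jumps of norm greater than `1` form a finite
measure `k`, so `exp (-tΨ)` is `exp (-tA|u|^α)` times `exp (tk(V)) * exp (-t ∫ cos ⟪u, y⟫ dk)`.
Multiplying by `cos ⟪·, y⟫` averages two translates of the Fourier transform, so it does not
increase the `L¹` norm of the transform; expanding the second exponential in powers of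
`∫ cos ⟪u, y⟫ dk` then shows that the extra factor costs at most `exp (2tk(V))`.

For the stable symbol, scaling gives exactly `(tA)^(-2/α)` times the value for `exp (-|u|^α)`. That
value is finite because `exp (-|u|^α)` is a mixture `∫ exp (-s|u|²) dη(s)` of Gaussians, where `η`
has Laplace transform `exp (-l^(α/2))`: each Gaussian contributes a multiple of `s⁻¹`, and
`∫ s⁻¹ dη(s) = ∫₀^∞ exp (-l^(α/2)) dl < ∞`.
-/

open Filter Set Topology
open scoped FourierTransform ENNReal NNReal

section CosTransform

variable {V : Type*} [NormedAddCommGroup V] [InnerProductSpace ℝ V] [MeasurableSpace V]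

lemma abs_integral_cos_le (k : Measure V) [IsFiniteMeasure k] (v : V) :
    |∫ y, Real.cos ⟪v, y⟫ ∂k| ≤ k.real univ := by
  simpa using norm_integral_le_of_norm_le_const (μ := k) (C := 1)
    (f := fun y => Real.cos ⟪v, y⟫) (ae_of_all _ fun y => Real.abs_cos_le_one _)

lemma continuous_integral_cos [BorelSpace V] (k : Measure V) [IsFiniteMeasure k] :
    Continuous fun v => ∫ y, Real.cos ⟪v, y⟫ ∂k :=
  continuous_of_dominated (fun v => Continuous.aestronglyMeasurable (by fun_prop))
    (fun v => ae_of_all _ fun y => Real.abs_cos_le_one _) (integrable_const 1)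
    (ae_of_all _ fun y => by fun_prop)

end CosTransform

section FourierNorm

variable {V E Ω : Type*} [NormedAddCommGroup V] [InnerProductSpace ℝ V] [FiniteDimensional ℝ V]
  [MeasurableSpace V] [BorelSpace V] [NormedAddCommGroup E] [NormedSpace ℂ E]
  [MeasurableSpace Ω]

/-- The `L¹` norm of the Fourier transform of `f`, with values in `[0, ∞]`. -/
noncomputable def fourierNorm (f : V → E) : ℝ≥0∞ := ∫⁻ w, ‖𝓕 f w‖ₑ

lemma fourierNorm_const_smul (c : ℝ) (f : V → E) :
    fourierNorm (fun v => c • f v) = ‖c‖ₑ * fourierNorm f := by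
  have h (w : V) : 𝓕 (fun v => c • f v) w = c • 𝓕 f w := by
    simp only [Real.fourier_eq, smul_comm _ c, integral_smul]
  simp only [fourierNorm, h, enorm_smul]
  exact lintegral_const_mul' _ _ enorm_ne_top

lemma fourier_comp_smul {c : ℝ} (hc : c ≠ 0) (f : V → E) (w : V) :
    𝓕 (fun v => f (c • v)) w = |(c ^ Module.finrank ℝ V)⁻¹| • 𝓕 f (c⁻¹ • w) := by
  simp only [Real.fourier_eq]
  rw [← Measure.integral_comp_smul]
  simp only [inner_smul_left, inner_smul_right, conj_trivial, inv_mul_cancel_left₀ hc]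

lemma lintegral_comp_smul {c : ℝ} (hc : c ≠ 0) (f : V → ℝ≥0∞) :
    ∫⁻ v, f (c • v) = ENNReal.ofReal |(c ^ Module.finrank ℝ V)⁻¹| * ∫⁻ v, f v := by
  rw [← smul_eq_mul, ← lintegral_smul_measure, ← Measure.map_addHaar_smul volume hc]
  exact (lintegral_map_equiv f (Homeomorph.smulOfNeZero c hc).toMeasurableEquiv).symm

lemma fourierNorm_comp_smul {c : ℝ} (hc : c ≠ 0) (f : V → E) :
    fourierNorm (fun v => f (c • v)) = fourierNorm f := by
  have hpow : c ^ Module.finrank ℝ V ≠ 0 := pow_ne_zero _ hc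
  simp only [fourierNorm, fourier_comp_smul hc, enorm_smul]
  rw [lintegral_const_mul' _ _ enorm_ne_top,
    lintegral_comp_smul (inv_ne_zero hc) (fun w => ‖𝓕 f w‖ₑ), ← mul_assoc,
    Real.enorm_of_nonneg (abs_nonneg _), ← ENNReal.ofReal_mul (abs_nonneg _), ← abs_mul,
    inv_pow, inv_inv, inv_mul_cancel₀ hpow, abs_one, ENNReal.ofReal_one, one_mul]

lemma aemeasurable_enorm_fourier {η : Measure Ω} [SFinite η] {F : Ω → V → E}
    (hF : AEStronglyMeasurable (Function.uncurry F) (η.prod volume)) :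
    AEMeasurable (Function.uncurry fun ω w => ‖𝓕 (F ω) w‖ₑ) (η.prod volume) := by
  have hF' : AEStronglyMeasurable (fun p : (Ω × V) × V => F p.1.1 p.2)
      ((η.prod volume).prod volume) :=
    hF.comp_quasiMeasurePreserving
      (QuasiMeasurePreserving.prodMap Measure.quasiMeasurePreserving_fst (.id volume))
  have hchar : Continuous fun p : V × V => Complex.exp (↑(-2 * Real.pi * ⟪p.2, p.1⟫) * Complex.I) :=
    by fun_prop
  have hchar' : Measurable fun p : (Ω × V) × V =>
      Complex.exp (↑(-2 * Real.pi * ⟪p.2, p.1.2⟫) * Complex.I) :=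
    hchar.measurable.comp (measurable_snd.comp measurable_fst |>.prodMk measurable_snd)
  have h := (hchar'.aestronglyMeasurable.smul hF').integral_prod_right'
  simpa only [Function.uncurry_def, Real.fourier_eq', Pi.smul_apply'] using h.enorm

lemma fourierNorm_integral_le {η : Measure Ω} [SFinite η] {F : Ω → V → E}
    (hF : Integrable (Function.uncurry F) (η.prod volume)) :
    fourierNorm (fun v => ∫ ω, F ω v ∂η) ≤ ∫⁻ ω, fourierNorm (F ω) ∂η := by
  have hswap (w : V) : 𝓕 (fun v => ∫ ω, F ω v ∂η) w = ∫ ω, 𝓕 (F ω) w ∂η := by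
    simp only [Real.fourier_eq, Circle.smul_def, ← integral_smul]
    have hchar : Continuous fun v : V => (𝐞 (-⟪v, w⟫) : ℂ) := by fun_prop
    exact (integral_integral_swap (hF.bdd_smul 1
      (hchar.measurable.comp measurable_snd).aestronglyMeasurable
      (ae_of_all _ fun p => (Circle.norm_coe _).le))).symm
  calc ∫⁻ w, ‖𝓕 (fun v => ∫ ω, F ω v ∂η) w‖ₑ
      ≤ ∫⁻ w, ∫⁻ ω, ‖𝓕 (F ω) w‖ₑ ∂η := by
        simp only [hswap]
        exact lintegral_mono fun w => enorm_integral_le_lintegral_enorm _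
    _ = ∫⁻ ω, fourierNorm (F ω) ∂η :=
        (lintegral_lintegral_swap (aemeasurable_enorm_fourier hF.aestronglyMeasurable)).symm

lemma fourier_cos_smul {g : V → E} (hg : Integrable g) (y w : V) :
    𝓕 (fun v => Real.cos ⟪v, y⟫ • g v) w =
      (2 : ℝ)⁻¹ • (𝓕 g (w - (2 * Real.pi)⁻¹ • y) + 𝓕 g (w + (2 * Real.pi)⁻¹ • y)) := by
  have hint (w : V) : Integrable fun v =>
      Complex.exp (↑(-2 * Real.pi * ⟪v, w⟫) * Complex.I) • g v := by
    refine hg.bdd_smul 1 (Continuous.aestronglyMeasurable (by fun_prop)) (ae_of_all _ fun v => ?_)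
    rw [Complex.norm_exp_ofReal_mul_I]
  simp only [Real.fourier_eq']
  rw [← integral_add (hint _) (hint _), ← integral_smul]
  refine integral_congr_ae (ae_of_all _ fun v => ?_)
  simp only [← add_smul, ← Complex.coe_smul, smul_smul]
  congr 1
  rw [Complex.ofReal_cos, Complex.cos, inner_sub_right, inner_add_right, real_inner_smul_right]
  have hsub : (↑(-2 * Real.pi * (⟪v, w⟫ - (2 * Real.pi)⁻¹ * ⟪v, y⟫)) : ℂ) * Complex.I =
      ↑(-2 * Real.pi * ⟪v, w⟫) * Complex.I + ⟪v, y⟫ * Complex.I := by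
    push_cast; field_simp; ring
  have hadd : (↑(-2 * Real.pi * (⟪v, w⟫ + (2 * Real.pi)⁻¹ * ⟪v, y⟫)) : ℂ) * Complex.I =
      ↑(-2 * Real.pi * ⟪v, w⟫) * Complex.I + -⟪v, y⟫ * Complex.I := by
    push_cast; field_simp; ring
  rw [hsub, hadd, Complex.exp_add, Complex.exp_add]
  push_cast
  ring

lemma continuous_fourier {g : V → E} (hg : Integrable g) : Continuous (𝓕 g) :=
  VectorFourier.fourierIntegral_continuous Real.continuous_fourierChar continuous_inner hg

lemma fourierNorm_cos_smul_le {g : V → E} (hg : Integrable g) (y : V) :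
    fourierNorm (fun v => Real.cos ⟪v, y⟫ • g v) ≤ fourierNorm g := by
  have hmeas : Measurable fun w => ‖𝓕 g w‖ₑ := (continuous_fourier hg).enorm.measurable
  set z : V := (2 * Real.pi)⁻¹ • y
  calc ∫⁻ w, ‖𝓕 (fun v => Real.cos ⟪v, y⟫ • g v) w‖ₑ
      ≤ ∫⁻ w, 2⁻¹ * (‖𝓕 g (w - z)‖ₑ + ‖𝓕 g (w + z)‖ₑ) := by
        refine lintegral_mono fun w => ?_
        rw [fourier_cos_smul hg, enorm_smul, Real.enorm_of_nonneg (by positivity),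
          ENNReal.ofReal_inv_of_pos two_pos, ENNReal.ofReal_ofNat]
        gcongr
        exact enorm_add_le _ _
    _ = 2⁻¹ * (fourierNorm g + fourierNorm g) := by
        rw [lintegral_const_mul' _ _ (by simp),
          lintegral_add_left (f := fun w => ‖𝓕 g (w - z)‖ₑ) (hmeas.comp (measurable_sub_const z)),
          lintegral_sub_right_eq_self (fun w => ‖𝓕 g w‖ₑ),
          lintegral_add_right_eq_self (fun w => ‖𝓕 g w‖ₑ), fourierNorm]
    _ = fourierNorm g := by
        rw [← two_mul, ← mul_assoc, ENNReal.inv_mul_cancel two_ne_zero ENNReal.ofNat_ne_top,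
          one_mul]

lemma fourierNorm_integral_cos_smul_le [CompleteSpace E] {k : Measure V} [IsFiniteMeasure k]
    {g : V → E} (hg : Integrable g) :
    fourierNorm (fun v => (∫ y, Real.cos ⟪v, y⟫ ∂k) • g v) ≤ k univ * fourierNorm g := by
  have hint : Integrable (Function.uncurry fun y v => Real.cos ⟪v, y⟫ • g v) (k.prod volume) :=
    (hg.comp_snd k).bdd_smul (𝕜 := ℝ) 1 (Continuous.aestronglyMeasurable (by fun_prop))
      (ae_of_all _ fun p => Real.abs_cos_le_one _)
  calc fourierNorm (fun v => (∫ y, Real.cos ⟪v, y⟫ ∂k) • g v)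
      = fourierNorm (fun v => ∫ y, Real.cos ⟪v, y⟫ • g v ∂k) := by
        simp only [integral_smul_const]
    _ ≤ ∫⁻ y, fourierNorm (fun v => Real.cos ⟪v, y⟫ • g v) ∂k := fourierNorm_integral_le hint
    _ ≤ ∫⁻ _, fourierNorm g ∂k := lintegral_mono fun y => fourierNorm_cos_smul_le hg y
    _ = k univ * fourierNorm g := by rw [lintegral_const, mul_comm]

lemma integrable_pow_integral_cos_smul {k : Measure V} [IsFiniteMeasure k] {g : V → E}
    (hg : Integrable g) (n : ℕ) :
    Integrable fun v => (∫ y, Real.cos ⟪v, y⟫ ∂k) ^ n • g v :=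
  hg.bdd_smul (𝕜 := ℝ) (k.real univ ^ n) ((continuous_integral_cos k).pow n).aestronglyMeasurable
    (ae_of_all _ fun v => by
      rw [norm_pow]
      exact pow_le_pow_left₀ (norm_nonneg _) (abs_integral_cos_le k v) n)

lemma fourierNorm_pow_integral_cos_smul_le [CompleteSpace E] {k : Measure V} [IsFiniteMeasure k]
    {g : V → E} (hg : Integrable g) (n : ℕ) :
    fourierNorm (fun v => (∫ y, Real.cos ⟪v, y⟫ ∂k) ^ n • g v) ≤
      k univ ^ n * fourierNorm g := by
  induction n with
  | zero => simp
  | succ n ih =>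
    simp only [pow_succ', mul_smul, mul_assoc]
    refine (fourierNorm_integral_cos_smul_le (integrable_pow_integral_cos_smul hg n)).trans ?_
    gcongr

lemma hasSum_exp_smul (x : ℝ) (z : E) :
    HasSum (fun n : ℕ => (x ^ n / n.factorial) • z) (Real.exp x • z) := by
  have h := NormedSpace.expSeries_div_hasSum_exp x
  rw [← Real.exp_eq_exp_ℝ] at h
  exact h.smul_const z

lemma fourierNorm_tsum_le {F : ℕ → V → E} (hF : ∀ n, Integrable (F n))
    (hsum : Summable fun n => ∫ v, ‖F n v‖) :
    fourierNorm (fun v => ∑' n, F n v) ≤ ∑' n, fourierNorm (F n) := by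
  have hchar (w : V) : Continuous fun v : V => (𝐞 (-⟪v, w⟫) : ℂ) := by fun_prop
  have hint (w : V) (n : ℕ) : Integrable fun v => 𝐞 (-⟪v, w⟫) • F n v :=
    (hF n).bdd_smul (𝕜 := ℂ) 1 (hchar w).aestronglyMeasurable
      (ae_of_all _ fun v => (Circle.norm_coe _).le)
  have hfourier (w : V) : 𝓕 (fun v => ∑' n, F n v) w = ∑' n, 𝓕 (F n) w := by
    have h := hasSum_integral_of_summable_integral_norm (hint w) (by simpa only [Circle.norm_smul])
    simp only [Real.fourier_eq, h.tsum_eq, tsum_const_smul']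
  calc ∫⁻ w, ‖𝓕 (fun v => ∑' n, F n v) w‖ₑ
      ≤ ∫⁻ w, ∑' n, ‖𝓕 (F n) w‖ₑ := by
        simp only [hfourier]
        exact lintegral_mono fun w => enorm_tsum_le_tsum_enorm
    _ = ∑' n, fourierNorm (F n) :=
        lintegral_tsum fun n => (continuous_fourier (hF n)).enorm.measurable.aemeasurable

lemma integral_norm_expTerm_integral_cos_smul_le {k : Measure V} [IsFiniteMeasure k] {g : V → E}
    (hg : Integrable g) (c : ℝ) (n : ℕ) :
    ∫ v, ‖(c ^ n / n.factorial) • (∫ y, Real.cos ⟪v, y⟫ ∂k) ^ n • g v‖ ≤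
      (|c| * k.real univ) ^ n / n.factorial * ∫ v, ‖g v‖ := by
  rw [← integral_const_mul]
  refine integral_mono ((integrable_pow_integral_cos_smul hg n).smul _).norm (hg.norm.const_mul _)
    fun v => ?_
  simp only [norm_smul, norm_pow, norm_div, mul_pow, Real.norm_eq_abs, RCLike.norm_natCast]
  rw [← mul_assoc, div_mul_eq_mul_div]
  gcongr
  exact abs_integral_cos_le k v

lemma fourierNorm_expTerm_integral_cos_smul_le [CompleteSpace E] {k : Measure V}
    [IsFiniteMeasure k] {g : V → E} (hg : Integrable g) (c : ℝ) (n : ℕ) :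
    fourierNorm (fun v => (c ^ n / n.factorial) • (∫ y, Real.cos ⟪v, y⟫ ∂k) ^ n • g v) ≤
      ENNReal.ofReal ((|c| * k.real univ) ^ n / n.factorial) * fourierNorm g := by
  have hcoeff : ‖c ^ n / n.factorial‖ₑ = ENNReal.ofReal (|c| ^ n / n.factorial) := by
    rw [Real.enorm_eq_ofReal_abs, abs_div, abs_pow, Nat.abs_cast]
  rw [fourierNorm_const_smul (c ^ n / n.factorial)
      (fun v => (∫ y, Real.cos ⟪v, y⟫ ∂k) ^ n • g v), hcoeff, mul_pow, mul_div_right_comm,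
    ENNReal.ofReal_mul (by positivity), ENNReal.ofReal_pow measureReal_nonneg,
    ofReal_measureReal, mul_assoc]
  gcongr
  exact fourierNorm_pow_integral_cos_smul_le hg n

lemma fourierNorm_exp_integral_cos_smul_le [CompleteSpace E] {k : Measure V} [IsFiniteMeasure k]
    {g : V → E} (hg : Integrable g) (c : ℝ) :
    fourierNorm (fun v => Real.exp (c * ∫ y, Real.cos ⟪v, y⟫ ∂k) • g v) ≤
      ENNReal.ofReal (Real.exp (|c| * k.real univ)) * fourierNorm g := by
  have hexp := NormedSpace.expSeries_div_hasSum_exp (|c| * k.real univ)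
  rw [← Real.exp_eq_exp_ℝ] at hexp
  calc fourierNorm (fun v => Real.exp (c * ∫ y, Real.cos ⟪v, y⟫ ∂k) • g v)
      = fourierNorm (fun v =>
          ∑' n : ℕ, (c ^ n / n.factorial) • (∫ y, Real.cos ⟪v, y⟫ ∂k) ^ n • g v) := by
        congr! with v
        simp only [← (hasSum_exp_smul (c * ∫ y, Real.cos ⟪v, y⟫ ∂k) (g v)).tsum_eq, mul_pow,
          smul_smul, div_mul_eq_mul_div]
    _ ≤ ∑' n : ℕ, fourierNorm (fun v =>
          (c ^ n / n.factorial) • (∫ y, Real.cos ⟪v, y⟫ ∂k) ^ n • g v) :=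
        fourierNorm_tsum_le (fun n => (integrable_pow_integral_cos_smul hg n).smul _)
          (.of_nonneg_of_le (fun n => by positivity)
            (integral_norm_expTerm_integral_cos_smul_le hg c) (hexp.summable.mul_right _))
    _ ≤ ∑' n : ℕ, ENNReal.ofReal ((|c| * k.real univ) ^ n / n.factorial) * fourierNorm g :=
        ENNReal.tsum_le_tsum (fourierNorm_expTerm_integral_cos_smul_le hg c)
    _ = ENNReal.ofReal (Real.exp (|c| * k.real univ)) * fourierNorm g := by
        rw [ENNReal.tsum_mul_right, ← hexp.tsum_eq,
          ENNReal.ofReal_tsum_of_nonneg (fun n => by positivity) hexp.summable]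

end FourierNorm

section Moments

variable {V E : Type*} [NormedAddCommGroup V] [InnerProductSpace ℝ V] [MeasurableSpace V]
  [BorelSpace V] [NormedAddCommGroup E] [NormedSpace ℝ E]

lemma integrable_norm_pow_mul_norm_inner_smul {f : V → E} {μ : Measure V} {n : ℕ}
    (hfm : AEStronglyMeasurable f μ) (hf : Integrable (fun v => ‖v‖ ^ (n + 1) * ‖f v‖) μ) (a : V) :
    Integrable (fun v => ‖v‖ ^ n * ‖⟪v, a⟫ • f v‖) μ := by
  have hinner : AEStronglyMeasurable (fun v : V => ⟪v, a⟫) μ :=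
    Continuous.aestronglyMeasurable (by fun_prop)
  have hpow : AEStronglyMeasurable (fun v : V => ‖v‖ ^ n) μ :=
    Continuous.aestronglyMeasurable (by fun_prop)
  refine (hf.const_mul ‖a‖).mono' (hpow.mul (hinner.smul hfm).norm) (ae_of_all _ fun v => ?_)
  rw [norm_mul, norm_norm, norm_smul, norm_pow, norm_norm]
  calc ‖v‖ ^ n * (‖⟪v, a⟫‖ * ‖f v‖) ≤ ‖v‖ ^ n * (‖v‖ * ‖a‖ * ‖f v‖) := by
        gcongr; exact norm_inner_le_norm v a
    _ = ‖a‖ * (‖v‖ ^ (n + 1) * ‖f v‖) := by ring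

lemma integrable_inner_smul {f : V → E} {μ : Measure V} (hfm : AEStronglyMeasurable f μ)
    (hf : Integrable (fun v => ‖v‖ * ‖f v‖) μ) (a : V) : Integrable (fun v => ⟪v, a⟫ • f v) μ := by
  have hinner : AEStronglyMeasurable (fun v : V => ⟪v, a⟫) μ :=
    Continuous.aestronglyMeasurable (by fun_prop)
  have h := integrable_norm_pow_mul_norm_inner_smul (n := 0) hfm (by simpa using hf) a
  simp only [pow_zero, one_mul] at h
  exact (integrable_norm_iff (hinner.smul hfm)).1 h

lemma integrable_inner_mul_inner_smul {f : V → E} {μ : Measure V} (hfm : AEStronglyMeasurable f μ)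
    (hf : Integrable (fun v => ‖v‖ ^ 2 * ‖f v‖) μ) (a b : V) :
    Integrable (fun v => (⟪v, a⟫ * ⟪v, b⟫) • f v) μ := by
  have hinner : AEStronglyMeasurable (fun v : V => ⟪v, b⟫) μ :=
    Continuous.aestronglyMeasurable (by fun_prop)
  have h := integrable_norm_pow_mul_norm_inner_smul (n := 1) hfm hf b
  simp only [pow_one] at h
  simp only [mul_smul]
  exact integrable_inner_smul (hinner.smul hfm) h a

end Moments

section SecondDerivative

variable {V E : Type*} [NormedAddCommGroup V] [InnerProductSpace ℝ V] [FiniteDimensional ℝ V]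
  [MeasurableSpace V] [BorelSpace V] [NormedAddCommGroup E] [NormedSpace ℂ E]

lemma fderiv_fourier_apply {f : V → E} (hf : Integrable f)
    (hf1 : Integrable fun v => ‖v‖ * ‖f v‖) (a x : V) :
    fderiv ℝ (𝓕 f) x a = -(2 * Real.pi * Complex.I) • 𝓕 (fun v => ⟪v, a⟫ • f v) x := by
  have hint : Integrable (VectorFourier.fourierSMulRight (innerSL ℝ) f) := by
    refine (hf1.const_mul (2 * Real.pi * ‖innerSL ℝ (E := V)‖)).mono'
      (hf.aestronglyMeasurable.fourierSMulRight) (ae_of_all _ fun v => ?_)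
    exact (VectorFourier.norm_fourierSMulRight_le _ f v).trans_eq (by ring)
  rw [Real.fderiv_fourier hf hf1, Real.fourier_continuousLinearMap_apply hint]
  exact congrFun (VectorFourier.fourierIntegral_const_smul _ _ _ _ _) x

lemma fderiv_fderiv_fourier_apply {f : V → E} (hfm : AEStronglyMeasurable f)
    (hf : ∀ n ≤ 2, Integrable fun v => ‖v‖ ^ n * ‖f v‖) (a b x : V) :
    fderiv ℝ (fun z => fderiv ℝ (𝓕 f) z a) x b =
      (-(2 * Real.pi) ^ 2) • 𝓕 (fun v => (⟪v, a⟫ * ⟪v, b⟫) • f v) x := by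
  have hf0 : Integrable f := (integrable_norm_iff hfm).1 (by simpa using hf 0 (by simp))
  have hf1 : Integrable fun v => ‖v‖ * ‖f v‖ := by simpa using hf 1 (by simp)
  have hg0 : Integrable fun v => ⟪v, a⟫ • f v := integrable_inner_smul hfm hf1 a
  have hg1 : Integrable fun v => ‖v‖ * ‖⟪v, a⟫ • f v‖ := by
    simpa using integrable_norm_pow_mul_norm_inner_smul hfm (hf 2 le_rfl) a
  simp only [fderiv_fourier_apply hf0 hf1]
  rw [fderiv_fun_const_smul (Real.differentiable_fourier hg0 hg1 x), _root_.smul_apply,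
    fderiv_fourier_apply hg0 hg1, smul_smul]
  have hsq : -(2 * Real.pi * Complex.I) * -(2 * Real.pi * Complex.I) =
      ((-(2 * Real.pi) ^ 2 : ℝ) : ℂ) := by
    push_cast
    linear_combination (2 * Real.pi : ℂ) ^ 2 * Complex.I_sq
  rw [hsq, Complex.coe_smul]
  simp only [smul_smul, mul_comm]

/-- The quantity `∫ |⟪a, ∇⟫⟪b, ∇⟫ 𝓕 f| / (2π)²`: differentiating `𝓕 f` in the direction `a`
amounts to multiplying `f` by `-2πi ⟪·, a⟫`. -/
noncomputable def fourierHessNorm (a b : V) (f : V → E) : ℝ≥0∞ :=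
  fourierNorm fun v => (⟪v, a⟫ * ⟪v, b⟫) • f v

lemma fourierHessNorm_comp_smul {c : ℝ} (hc : c ≠ 0) (a b : V) (f : V → E) :
    fourierHessNorm a b (fun v => f (c • v)) =
      ENNReal.ofReal (c ^ 2)⁻¹ * fourierHessNorm a b f := by
  have hscale (v : V) : (⟪v, a⟫ * ⟪v, b⟫) • f (c • v) =
      (c ^ 2)⁻¹ • (⟪c • v, a⟫ * ⟪c • v, b⟫) • f (c • v) := by
    rw [smul_smul, real_inner_smul_left, real_inner_smul_left]
    congr 1
    field_simp
  simp only [fourierHessNorm, hscale]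
  rw [fourierNorm_const_smul, Real.enorm_of_nonneg (by positivity),
    fourierNorm_comp_smul hc (fun v => (⟪v, a⟫ * ⟪v, b⟫) • f v)]

end SecondDerivative

section Gaussian

variable {V : Type*} [NormedAddCommGroup V] [InnerProductSpace ℝ V]

lemma hasFDerivAt_exp_neg_mul_sq_norm (k : ℝ) (x : V) :
    HasFDerivAt (fun z : V => Real.exp (-k * ‖z‖ ^ 2))
      ((-2 * k * Real.exp (-k * ‖x‖ ^ 2)) • innerSL ℝ x) x := by
  convert ((hasStrictFDerivAt_norm_sq x).hasFDerivAt.const_mul (-k)).exp using 1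
  rw [← Nat.cast_smul_eq_nsmul ℝ, smul_smul, smul_smul]
  congr 1
  push_cast
  ring

lemma fderiv_exp_neg_mul_sq_norm_apply (k : ℝ) (x a : V) :
    fderiv ℝ (fun z : V => Real.exp (-k * ‖z‖ ^ 2)) x a =
      -2 * k * (Real.exp (-k * ‖x‖ ^ 2) * ⟪a, x⟫) := by
  rw [(hasFDerivAt_exp_neg_mul_sq_norm k x).fderiv, _root_.smul_apply, innerSL_apply_apply,
    real_inner_comm, smul_eq_mul, mul_assoc]

lemma fderiv_fderiv_exp_neg_mul_sq_norm_apply (k : ℝ) (x a b : V) :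
    fderiv ℝ (fun z => fderiv ℝ (fun z : V => Real.exp (-k * ‖z‖ ^ 2)) z a) x b =
      Real.exp (-k * ‖x‖ ^ 2) * (4 * k ^ 2 * ⟪x, a⟫ * ⟪x, b⟫ - 2 * k * ⟪a, b⟫) := by
  have hderiv := ((hasFDerivAt_exp_neg_mul_sq_norm k x).mul
    (innerSL ℝ a).hasFDerivAt).const_mul (-2 * k)
  simp only [fderiv_exp_neg_mul_sq_norm_apply]
  refine (DFunLike.congr_fun hderiv.fderiv b).trans ?_
  simp only [_root_.smul_apply, _root_.add_apply, innerSL_apply_apply, smul_eq_mul,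
    real_inner_comm x a]
  ring

lemma fderiv_fderiv_exp_neg_mul_sq_norm_smul_apply {E : Type*} [NormedAddCommGroup E]
    [NormedSpace ℝ E] (k : ℝ) (c : E) (x a b : V) :
    fderiv ℝ (fun z => fderiv ℝ (fun z : V => Real.exp (-k * ‖z‖ ^ 2) • c) z a) x b =
      (Real.exp (-k * ‖x‖ ^ 2) * (4 * k ^ 2 * ⟪x, a⟫ * ⟪x, b⟫ - 2 * k * ⟪a, b⟫)) • c := by
  have hfderiv (z : V) : fderiv ℝ (fun z : V => Real.exp (-k * ‖z‖ ^ 2) • c) z a =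
      fderiv ℝ (fun z : V => Real.exp (-k * ‖z‖ ^ 2)) z a • c := by
    rw [fderiv_smul_const (hasFDerivAt_exp_neg_mul_sq_norm k z).differentiableAt]
    rfl
  have hdiff : DifferentiableAt ℝ
      (fun z => fderiv ℝ (fun z : V => Real.exp (-k * ‖z‖ ^ 2)) z a) x := by
    simp only [fderiv_exp_neg_mul_sq_norm_apply]
    exact ((hasFDerivAt_exp_neg_mul_sq_norm k x).differentiableAt.mul
      (innerSL ℝ a).differentiableAt).const_mul _
  simp only [hfderiv]
  rw [fderiv_smul_const hdiff, ← fderiv_fderiv_exp_neg_mul_sq_norm_apply]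
  rfl

variable [FiniteDimensional ℝ V] [MeasurableSpace V] [BorelSpace V]

lemma fourier_ofReal_exp_neg_sq_norm :
    𝓕 (fun v : V => ((Real.exp (-1 * ‖v‖ ^ 2) : ℝ) : ℂ)) = fun w =>
      Real.exp (-Real.pi ^ 2 * ‖w‖ ^ 2) • (Real.pi : ℂ) ^ (Module.finrank ℝ V / 2 : ℂ) := by
  ext w
  have h := fourier_gaussian_innerProductSpace (b := 1) (by simp) w
  rw [Complex.real_smul, mul_comm]
  push_cast
  simpa using h

lemma fourierHessNorm_exp_neg_mul_sq_norm {s : ℝ} (hs : 0 < s) (a b : V) :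
    fourierHessNorm a b (fun v => ((Real.exp (-s * ‖v‖ ^ 2) : ℝ) : ℂ)) =
      ENNReal.ofReal s⁻¹ * fourierHessNorm a b (fun v => ((Real.exp (-1 * ‖v‖ ^ 2) : ℝ) : ℂ)) := by
  rw [← Real.sq_sqrt hs.le, ← fourierHessNorm_comp_smul (Real.sqrt_pos.2 hs).ne']
  simp only [norm_smul, mul_pow, Real.norm_eq_abs, sq_abs, neg_mul, one_mul]

variable [Nontrivial V]

lemma integrable_norm_pow_mul_exp_neg_mul_rpow (μ : Measure V) [μ.IsAddHaarMeasure] (n : ℕ)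
    {p b : ℝ} (hp : 0 < p) (hb : 0 < b) :
    Integrable (fun v : V => ‖v‖ ^ n * Real.exp (-b * ‖v‖ ^ p)) μ := by
  rw [integrable_fun_norm_addHaar (μ := μ) (f := fun r => r ^ n * Real.exp (-b * r ^ p))]
  have h := integrableOn_rpow_mul_exp_neg_mul_rpow (p := p) (b := b)
    (s := ((Module.finrank ℝ V - 1 + n : ℕ) : ℝ)) (neg_one_lt_zero.trans_le (Nat.cast_nonneg _))
    hp hb
  refine h.congr_fun (fun r _ => ?_) measurableSet_Ioi
  simp only [Real.rpow_natCast, smul_eq_mul, pow_add, mul_assoc]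

lemma integrable_norm_pow_mul_exp_neg_mul_sq (n : ℕ) {b : ℝ} (hb : 0 < b) :
    Integrable (fun v : V => ‖v‖ ^ n * Real.exp (-b * ‖v‖ ^ 2)) := by
  simpa using integrable_norm_pow_mul_exp_neg_mul_rpow (volume : Measure V) n two_pos hb

lemma fourierHessNorm_exp_neg_sq_norm_lt_top (a b : V) :
    fourierHessNorm a b (fun v => ((Real.exp (-1 * ‖v‖ ^ 2) : ℝ) : ℂ)) < ∞ := by
  have hmeas (k : ℝ) : AEStronglyMeasurable fun v : V => Real.exp (-k * ‖v‖ ^ 2) :=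
    Continuous.aestronglyMeasurable (by fun_prop)
  have hint (c : ℂ) {k : ℝ} (hk : 0 < k) : Integrable fun w : V =>
      (Real.exp (-k * ‖w‖ ^ 2) * (4 * k ^ 2 * ⟪w, a⟫ * ⟪w, b⟫ - 2 * k * ⟪a, b⟫)) • c := by
    have h0 := integrable_norm_pow_mul_exp_neg_mul_sq (V := V) 0 hk
    have h2 := integrable_inner_mul_inner_smul (hmeas k)
      (by simpa using integrable_norm_pow_mul_exp_neg_mul_sq (V := V) 2 hk) a b
    simp only [pow_zero, one_mul] at h0
    refine (((h2.const_mul (4 * k ^ 2)).sub (h0.const_mul (2 * k * ⟪a, b⟫))).congr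
      (ae_of_all _ fun w => ?_)).smul_const c
    simp only [Pi.sub_apply, smul_eq_mul]
    ring
  have hfderiv (w : V) := fderiv_fderiv_fourier_apply
    (f := fun v : V => ((Real.exp (-1 * ‖v‖ ^ 2) : ℝ) : ℂ))
    (Complex.continuous_ofReal.comp_aestronglyMeasurable (hmeas 1)) (fun n _ => by
      simpa only [Complex.norm_real, Real.norm_of_nonneg (Real.exp_pos _).le] using
        integrable_norm_pow_mul_exp_neg_mul_sq (V := V) n one_pos) a b w
  simp only [fourier_ofReal_exp_neg_sq_norm, fderiv_fderiv_exp_neg_mul_sq_norm_smul_apply]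
    at hfderiv
  have h := hint ((Real.pi : ℂ) ^ (Module.finrank ℝ V / 2 : ℂ)) (k := Real.pi ^ 2) (by positivity)
  simp only [hfderiv] at h
  have hpi : -(2 * Real.pi) ^ 2 ≠ 0 := neg_ne_zero.2 (by positivity)
  exact ((integrable_fun_smul_iff hpi _).1 h).2

end Gaussian

section LaplaceTransform

/-- The Laplace transform of a measure on the half-line `[0, ∞)`. -/
noncomputable def laplaceTransform (μ : Measure ℝ≥0) (l : ℝ≥0) : ℝ :=
  ∫ s : ℝ≥0, Real.exp (-(s * l : ℝ)) ∂μ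

lemma norm_exp_neg_mul_le_one (s l : ℝ≥0) : ‖Real.exp (-(s * l : ℝ))‖ ≤ 1 := by
  rw [Real.norm_of_nonneg (Real.exp_nonneg _), Real.exp_le_one_iff]
  exact neg_nonpos.2 (by positivity)

lemma integrable_exp_neg_mul (μ : Measure ℝ≥0) [IsFiniteMeasure μ] (l : ℝ≥0) :
    Integrable (fun s : ℝ≥0 => Real.exp (-(s * l : ℝ))) μ :=
  .of_bound (Continuous.aestronglyMeasurable (by fun_prop)) 1
    (ae_of_all _ fun s => norm_exp_neg_mul_le_one s l)

lemma laplaceTransform_conv (μ ν : Measure ℝ≥0) [IsFiniteMeasure μ] [IsFiniteMeasure ν]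
    (l : ℝ≥0) :
    laplaceTransform (μ ∗ ν) l = laplaceTransform μ l * laplaceTransform ν l := by
  simp only [laplaceTransform]
  rw [integral_conv (integrable_exp_neg_mul _ l), ← integral_mul_const]
  simp only [NNReal.coe_add, add_mul, neg_add, Real.exp_add, integral_const_mul]

lemma laplaceTransform_map_mul (μ : Measure ℝ≥0) (c l : ℝ≥0) :
    laplaceTransform (μ.map (c * ·)) l = laplaceTransform μ (c * l) := by
  simp only [laplaceTransform]
  rw [integral_map (by fun_prop) (Continuous.aestronglyMeasurable (by fun_prop))]
  simp only [NNReal.coe_mul, mul_assoc, mul_left_comm]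

lemma exists_laplaceTransform_eq_pow (μ : Measure ℝ≥0) [IsProbabilityMeasure μ] (n : ℕ) :
    ∃ ν : Measure ℝ≥0, IsProbabilityMeasure ν ∧
      ∀ l, laplaceTransform ν l = laplaceTransform μ l ^ n := by
  induction n with
  | zero => exact ⟨Measure.dirac 0, inferInstance, fun l => by simp [laplaceTransform]⟩
  | succ n ih =>
    obtain ⟨ν, _, hν⟩ := ih
    exact ⟨ν ∗ μ, inferInstance, fun l => by rw [laplaceTransform_conv, hν, pow_succ]⟩

lemma measureReal_Ioi_le_one_sub_laplaceTransform (μ : Measure ℝ≥0) [IsProbabilityMeasure μ]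
    {l : ℝ≥0} (hl : l ≠ 0) :
    (1 - Real.exp (-1)) * μ.real (Ioi l⁻¹) ≤ 1 - laplaceTransform μ l := by
  have hexp : Real.exp (-1) < 1 := Real.exp_lt_one_iff.2 (by norm_num)
  have hint := integrable_exp_neg_mul μ l
  calc (1 - Real.exp (-1)) * μ.real (Ioi l⁻¹)
      ≤ (1 - Real.exp (-1)) *
          μ.real {s : ℝ≥0 | 1 - Real.exp (-1) ≤ 1 - Real.exp (-(s * l : ℝ))} := by
        refine mul_le_mul_of_nonneg_left (measureReal_mono fun s hs => ?_) (by linarith)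
        have hsl : 1 ≤ s * l := by
          rw [← inv_mul_cancel₀ hl]
          exact mul_le_mul_left (le_of_lt hs) l
        simp only [mem_ofPred_eq, sub_le_sub_iff_left, Real.exp_le_exp, neg_le_neg_iff]
        exact_mod_cast hsl
    _ ≤ ∫ s : ℝ≥0, (1 - Real.exp (-(s * l : ℝ))) ∂μ :=
        mul_meas_ge_le_integral_of_nonneg (ae_of_all _ fun s =>
          sub_nonneg.2 ((Real.le_norm_self _).trans (norm_exp_neg_mul_le_one s l)))
          ((integrable_const 1).sub hint) _
    _ = 1 - laplaceTransform μ l := by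
        rw [integral_sub (integrable_const 1) hint, laplaceTransform]
        simp

lemma isTightMeasureSet_of_one_sub_laplaceTransform_le {S : Set (Measure ℝ≥0)}
    (hprob : ∀ μ ∈ S, IsProbabilityMeasure μ)
    (hS : ∀ ε : ℝ, 0 < ε → ∃ l ≠ 0, ∀ μ ∈ S, 1 - laplaceTransform μ l ≤ ε) :
    IsTightMeasureSet S := by
  have hexp : 0 < 1 - Real.exp (-1) := sub_pos.2 (Real.exp_lt_one_iff.2 (by norm_num))
  refine isTightMeasureSet_iff_exists_isCompact_measure_compl_le.2 fun ε hε => ?_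
  obtain ⟨δ, hδ, hδε⟩ := ENNReal.lt_iff_exists_nnreal_btwn.1 hε
  obtain ⟨l, hl, hle⟩ := hS ((1 - Real.exp (-1)) * δ) (mul_pos hexp (by exact_mod_cast hδ))
  refine ⟨Iic l⁻¹, by rw [← Icc_bot]; exact isCompact_Icc, fun μ hμ => ?_⟩
  have := hprob μ hμ
  rw [compl_Iic]
  refine le_trans ?_ hδε.le
  rw [← ofReal_measureReal, ← ENNReal.ofReal_coe_nnreal]
  refine ENNReal.ofReal_le_ofReal (le_of_mul_le_mul_left ?_ hexp)
  exact (measureReal_Ioi_le_one_sub_laplaceTransform μ hl).trans (hle μ hμ)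

lemma tendsto_laplaceTransform {ι : Type*} {F : Filter ι} {μ : ι → ProbabilityMeasure ℝ≥0}
    {η : ProbabilityMeasure ℝ≥0} (h : Tendsto μ F (𝓝 η)) (l : ℝ≥0) :
    Tendsto (fun i => laplaceTransform (μ i) l) F (𝓝 (laplaceTransform η l)) :=
  ProbabilityMeasure.tendsto_iff_forall_integral_tendsto.1 h
    (.ofNormedAddCommGroup (fun s : ℝ≥0 => Real.exp (-(s * l : ℝ))) (by fun_prop) 1
      fun s => norm_exp_neg_mul_le_one s l)

lemma exists_laplaceTransform_eq_of_tendsto {μ : ℕ → Measure ℝ≥0}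
    [hprob : ∀ n, IsProbabilityMeasure (μ n)] (htight : IsTightMeasureSet (range μ)) {φ : ℝ≥0 → ℝ}
    (hφ : ∀ l, Tendsto (fun n => laplaceTransform (μ n) l) atTop (𝓝 (φ l))) :
    ∃ η : Measure ℝ≥0, IsProbabilityMeasure η ∧ ∀ l, laplaceTransform η l = φ l := by
  let ν : ℕ → ProbabilityMeasure ℝ≥0 := fun n => ⟨μ n, hprob n⟩
  have hcompact : IsCompact (closure (range ν)) :=
    isCompact_closure_of_isTightMeasureSet <| htight.subset <| by
      rintro _ ⟨_, ⟨n, rfl⟩, rfl⟩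
      exact ⟨n, rfl⟩
  obtain ⟨η, -, ψ, hψ, hη⟩ := hcompact.tendsto_subseq fun n => subset_closure (mem_range_self n)
  exact ⟨η, inferInstance, fun l =>
    tendsto_nhds_unique (tendsto_laplaceTransform hη l) ((hφ l).comp hψ.tendsto_atTop)⟩

lemma lintegral_Ioi_exp_neg_mul (s : ℝ≥0) :
    ∫⁻ l in Ioi (0 : ℝ), ENNReal.ofReal (Real.exp (-(s * l))) = (s : ℝ≥0∞)⁻¹ := by
  rcases eq_zero_or_pos s with rfl | hs
  · simp
  have hneg : -(s : ℝ) < 0 := neg_lt_zero.2 hs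
  simp only [← neg_mul]
  rw [← ofReal_integral_eq_lintegral_ofReal (integrableOn_exp_mul_Ioi hneg 0)
    (ae_of_all _ fun l => Real.exp_nonneg _), integral_exp_mul_Ioi hneg, mul_zero, Real.exp_zero,
    neg_div_neg_eq, one_div, ENNReal.ofReal_inv_of_pos (by exact_mod_cast hs),
    ENNReal.ofReal_coe_nnreal]

lemma lintegral_inv_eq_lintegral_laplaceTransform (μ : Measure ℝ≥0) [IsFiniteMeasure μ] :
    ∫⁻ s : ℝ≥0, (s : ℝ≥0∞)⁻¹ ∂μ =
      ∫⁻ l in Ioi (0 : ℝ), ENNReal.ofReal (laplaceTransform μ l.toNNReal) := by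
  simp only [← lintegral_Ioi_exp_neg_mul]
  rw [lintegral_lintegral_swap (Measurable.aemeasurable (by fun_prop))]
  refine setLIntegral_congr_fun measurableSet_Ioi fun l hl => ?_
  simp only [laplaceTransform, Real.coe_toNNReal l (le_of_lt hl)]
  rw [ofReal_integral_eq_lintegral_ofReal
    (by simpa only [Real.coe_toNNReal l (le_of_lt hl)] using integrable_exp_neg_mul μ l.toNNReal)
    (ae_of_all _ fun s => Real.exp_nonneg _)]

end LaplaceTransform

section StableSubordinator

lemma integrableOn_min_rpow_one_mul_rpow {p q : ℝ} (hq : 0 < q) (hqp : q < p) :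
    IntegrableOn (fun r : ℝ => min (r ^ p) 1 * r ^ (-1 - q)) (Ioi 0) := by
  rw [← Ioc_union_Ioi_eq_Ioi zero_le_one]
  refine IntegrableOn.union ?_ ?_
  · have h := intervalIntegral.intervalIntegrable_rpow' (a := 0) (b := 1)
      (r := p - 1 - q) (by linarith)
    rw [intervalIntegrable_iff_integrableOn_Ioc_of_le zero_le_one] at h
    refine h.congr_fun (fun r hr => ?_) measurableSet_Ioc
    simp only
    rw [min_eq_left (Real.rpow_le_one hr.1.le hr.2 (hq.trans hqp).le), ← Real.rpow_add hr.1]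
    ring_nf
  · refine (integrableOn_Ioi_rpow_of_lt (a := -1 - q) (by linarith) one_pos).congr_fun
      (fun r (hr : 1 < r) => ?_) measurableSet_Ioi
    simp only
    rw [min_eq_right (Real.one_le_rpow hr.le (hq.trans hqp).le), one_mul]

variable {β : ℝ}

lemma one_sub_exp_neg_nonneg {x : ℝ} (hx : 0 ≤ x) : 0 ≤ 1 - Real.exp (-x) :=
  sub_nonneg.2 (Real.exp_le_one_iff.2 (neg_nonpos.2 hx))

lemma integrableOn_one_sub_exp_neg_mul_rpow (hβ0 : 0 < β) (hβ1 : β < 1) {l : ℝ} (hl : 0 ≤ l) :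
    IntegrableOn (fun s => (1 - Real.exp (-(s * l))) * s ^ (-1 - β)) (Ioi 0) := by
  refine ((integrableOn_min_rpow_one_mul_rpow hβ0 hβ1).const_mul (max l 1)).mono'
    (Measurable.aestronglyMeasurable (by fun_prop)) ((ae_restrict_iff' measurableSet_Ioi).2
      (ae_of_all _ fun s (hs : 0 < s) => ?_))
  have hnonneg := one_sub_exp_neg_nonneg (mul_nonneg hs.le hl)
  rw [Real.norm_of_nonneg (by positivity), ← mul_assoc, Real.rpow_one]
  refine mul_le_mul_of_nonneg_right ?_ (by positivity)
  have hlin : 1 - Real.exp (-(s * l)) ≤ s * l := by linarith [Real.one_sub_le_exp_neg (s * l)]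
  have hone : 1 - Real.exp (-(s * l)) ≤ 1 := by linarith [Real.exp_pos (-(s * l))]
  rw [mul_min_of_nonneg _ _ (by positivity), mul_one]
  exact le_min (hlin.trans (by rw [mul_comm]; gcongr; exact le_max_left _ _))
    (hone.trans (le_max_right _ _))

/-- The constant `∫ (1 - e⁻ˢ) s ^ (-1 - β) ds`, equal to `Γ(1 - β) / β`, normalising the Lévy
measure of the `β`-stable subordinator. -/
noncomputable def subordinatorConst (β : ℝ) : ℝ :=
  ∫ s in Ioi 0, (1 - Real.exp (-s)) * s ^ (-1 - β)

lemma subordinatorConst_pos (hβ0 : 0 < β) (hβ1 : β < 1) : 0 < subordinatorConst β := by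
  have hint := integrableOn_one_sub_exp_neg_mul_rpow hβ0 hβ1 zero_le_one
  simp only [mul_one] at hint
  refine (setIntegral_pos_iff_support_of_nonneg_ae ((ae_restrict_iff' measurableSet_Ioi).2
    (ae_of_all _ fun s (hs : 0 < s) =>
      mul_nonneg (one_sub_exp_neg_nonneg hs.le) (by positivity))) hint).2 ?_
  have hsupport : Ioi 0 ⊆ Function.support fun s : ℝ => (1 - Real.exp (-s)) * s ^ (-1 - β) :=
    fun s (hs : 0 < s) => mul_ne_zero
      (sub_ne_zero.2 (Real.exp_lt_one_iff.2 (neg_lt_zero.2 hs)).ne') (by positivity)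
  rw [inter_eq_self_of_subset_right hsupport]
  simp

lemma integral_one_sub_exp_neg_mul_rpow (hβ0 : 0 < β) {l : ℝ} (hl : 0 ≤ l) :
    ∫ s in Ioi 0, (1 - Real.exp (-(s * l))) * s ^ (-1 - β) = subordinatorConst β * l ^ β := by
  rcases hl.eq_or_lt with rfl | hl
  · simp [Real.zero_rpow hβ0.ne']
  have hscale := integral_comp_mul_left_Ioi (fun s => (1 - Real.exp (-s)) * s ^ (-1 - β)) 0 hl
  have hcongr : ∫ s in Ioi 0, (1 - Real.exp (-(s * l))) * s ^ (-1 - β) =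
      ∫ s in Ioi 0, l ^ (1 + β) * ((1 - Real.exp (-(l * s))) * (l * s) ^ (-1 - β)) := by
    refine setIntegral_congr_fun measurableSet_Ioi fun s (hs : 0 < s) => ?_
    have hpow : l ^ (1 + β) * l ^ (-1 - β) = 1 := by
      rw [← Real.rpow_add hl]
      simp
    simp only [Real.mul_rpow hl.le hs.le, mul_comm s l]
    linear_combination (-(1 - Real.exp (-(l * s))) * s ^ (-1 - β)) * hpow
  rw [hcongr, integral_const_mul, hscale, mul_zero, smul_eq_mul, Real.rpow_add hl, Real.rpow_one,
    subordinatorConst]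
  field_simp

/-- The density `(1 - e⁻ˢ) s ^ (-1 - β)` on `(0, ∞)`, normalised to have total mass one. It is the
step density of a random walk whose rescaled limit is the `β`-stable law. -/
noncomputable def stepDensity (β s : ℝ) : ℝ :=
  (subordinatorConst β)⁻¹ * ((1 - Real.exp (-s)) * s ^ (-1 - β))

lemma measurable_stepDensity (β : ℝ) : Measurable (stepDensity β) := by
  unfold stepDensity
  fun_prop

lemma stepDensity_nonneg (hβ0 : 0 < β) (hβ1 : β < 1) {s : ℝ} (hs : 0 < s) :
    0 ≤ stepDensity β s :=
  mul_nonneg (inv_nonneg.2 (subordinatorConst_pos hβ0 hβ1).le)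
    (mul_nonneg (one_sub_exp_neg_nonneg hs.le) (by positivity))

lemma integral_stepDensity_mul_exp_neg_mul (hβ0 : 0 < β) (hβ1 : β < 1) {l : ℝ} (hl : 0 ≤ l) :
    ∫ s in Ioi 0, stepDensity β s * Real.exp (-(s * l)) = (l + 1) ^ β - l ^ β := by
  have hl1 : 0 ≤ l + 1 := by positivity
  have hdiff (s : ℝ) : stepDensity β s * Real.exp (-(s * l)) = (subordinatorConst β)⁻¹ *
      ((1 - Real.exp (-(s * (l + 1)))) * s ^ (-1 - β) -
        (1 - Real.exp (-(s * l))) * s ^ (-1 - β)) := by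
    rw [mul_add, neg_add, Real.exp_add, mul_one, stepDensity]
    ring
  simp only [hdiff]
  rw [integral_const_mul, integral_sub (integrableOn_one_sub_exp_neg_mul_rpow hβ0 hβ1 hl1)
      (integrableOn_one_sub_exp_neg_mul_rpow hβ0 hβ1 hl),
    integral_one_sub_exp_neg_mul_rpow hβ0 hl1, integral_one_sub_exp_neg_mul_rpow hβ0 hl, ← mul_sub,
    inv_mul_cancel_left₀ (subordinatorConst_pos hβ0 hβ1).ne']

lemma exists_laplaceTransform_eq_add_one_rpow_sub_rpow (hβ0 : 0 < β) (hβ1 : β < 1) :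
    ∃ ρ : Measure ℝ≥0, IsProbabilityMeasure ρ ∧
      ∀ l : ℝ≥0, laplaceTransform ρ l = ((l : ℝ) + 1) ^ β - (l : ℝ) ^ β := by
  let ν : Measure ℝ :=
    (volume.restrict (Ioi 0)).withDensity fun s => ENNReal.ofReal (stepDensity β s)
  have hlaplace (l : ℝ≥0) :
      laplaceTransform (ν.map Real.toNNReal) l = ((l : ℝ) + 1) ^ β - (l : ℝ) ^ β := by
    rw [laplaceTransform, integral_map (by fun_prop)
        (Continuous.aestronglyMeasurable (by fun_prop)),
      integral_withDensity_eq_integral_toReal_smul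
        (measurable_stepDensity β).ennreal_ofReal (ae_of_all _ fun _ => ENNReal.ofReal_lt_top),
      ← integral_stepDensity_mul_exp_neg_mul hβ0 hβ1 l.coe_nonneg]
    refine setIntegral_congr_fun measurableSet_Ioi fun s (hs : 0 < s) => ?_
    simp only [ENNReal.toReal_ofReal (stepDensity_nonneg hβ0 hβ1 hs), smul_eq_mul,
      Real.coe_toNNReal s hs.le]
  refine ⟨ν.map Real.toNNReal, isProbabilityMeasure_iff_real.2 ?_, hlaplace⟩
  simpa [laplaceTransform, Real.zero_rpow hβ0.ne'] using hlaplace 0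

lemma one_sub_rpow_le_add_one_rpow_sub_rpow (hβ0 : 0 ≤ β) {x : ℝ} (hx : 0 ≤ x) :
    1 - x ^ β ≤ (x + 1) ^ β - x ^ β :=
  sub_le_sub_right (Real.one_le_rpow (by linarith) hβ0) _

lemma add_one_rpow_sub_rpow_le (hβ0 : 0 ≤ β) (hβ1 : β ≤ 1) {x : ℝ} (hx : 0 ≤ x) :
    (x + 1) ^ β - x ^ β ≤ 1 + β * x - x ^ β := by
  have := rpow_one_add_le_one_add_mul_self (by linarith : -1 ≤ x) hβ0 hβ1
  rw [add_comm x]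
  linarith

lemma natCast_mul_rpow_neg_inv_mul_rpow (hβ0 : 0 < β) {n : ℕ} (hn : n ≠ 0) {l : ℝ} (hl : 0 ≤ l) :
    n * ((n : ℝ) ^ (-β⁻¹) * l) ^ β = l ^ β := by
  rw [Real.mul_rpow (by positivity) hl, ← Real.rpow_mul (by positivity), neg_mul,
    inv_mul_cancel₀ hβ0.ne', Real.rpow_neg_one, mul_inv_cancel_left₀ (by exact_mod_cast hn)]

lemma tendsto_natCast_mul_add_one_rpow_sub_rpow_sub_one (hβ0 : 0 < β) (hβ1 : β < 1) {l : ℝ}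
    (hl : 0 ≤ l) :
    Tendsto (fun n : ℕ => n * ((((n : ℝ) ^ (-β⁻¹) * l + 1) ^ β - ((n : ℝ) ^ (-β⁻¹) * l) ^ β) - 1))
      atTop (𝓝 (-l ^ β)) := by
  have hpow : Tendsto (fun n : ℕ => β * l * (n : ℝ) ^ (-(β⁻¹ - 1)) - l ^ β) atTop (𝓝 (-l ^ β)) := by
    have := (tendsto_rpow_neg_atTop (sub_pos.2 ((one_lt_inv₀ hβ0).2 hβ1))).comp
      tendsto_natCast_atTop_atTop
    simpa using (this.const_mul (β * l)).sub_const (l ^ β)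
  refine tendsto_of_tendsto_of_tendsto_of_le_of_le' tendsto_const_nhds hpow ?_ ?_ <;>
    filter_upwards [eventually_ne_atTop 0] with n hn
  · rw [← natCast_mul_rpow_neg_inv_mul_rpow hβ0 hn hl, ← mul_neg]
    have := one_sub_rpow_le_add_one_rpow_sub_rpow hβ0.le
      (x := (n : ℝ) ^ (-β⁻¹) * l) (by positivity)
    gcongr
    linarith
  · have hn0 : (n : ℝ) ≠ 0 := by exact_mod_cast hn
    have := add_one_rpow_sub_rpow_le hβ0.le hβ1.le (x := (n : ℝ) ^ (-β⁻¹) * l) (by positivity)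
    rw [← natCast_mul_rpow_neg_inv_mul_rpow hβ0 hn hl,
      show -(β⁻¹ - 1) = -β⁻¹ + 1 by ring, Real.rpow_add_one hn0]
    calc _ ≤ (n : ℝ) * (β * ((n : ℝ) ^ (-β⁻¹) * l) - ((n : ℝ) ^ (-β⁻¹) * l) ^ β) :=
          mul_le_mul_of_nonneg_left (by linarith) n.cast_nonneg
      _ = _ := by ring

lemma one_sub_add_one_rpow_sub_rpow_pow_le (hβ0 : 0 < β) (n : ℕ) {l : ℝ} (hl : 0 ≤ l) :
    1 - (((n : ℝ) ^ (-β⁻¹) * l + 1) ^ β - ((n : ℝ) ^ (-β⁻¹) * l) ^ β) ^ n ≤ l ^ β := by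
  rcases eq_or_ne n 0 with rfl | hn
  · simpa using Real.rpow_nonneg hl β
  set x : ℝ := (n : ℝ) ^ (-β⁻¹) * l with hx
  have hx0 : 0 ≤ x := by positivity
  have hnonneg : 0 ≤ (x + 1) ^ β - x ^ β :=
    sub_nonneg.2 (Real.rpow_le_rpow hx0 (by linarith) hβ0.le)
  have hbernoulli := one_add_mul_le_pow (a := (x + 1) ^ β - x ^ β - 1) (by linarith) n
  rw [add_sub_cancel] at hbernoulli
  have hle : n * (1 - x ^ β) ≤ n * ((x + 1) ^ β - x ^ β) :=
    mul_le_mul_of_nonneg_left (one_sub_rpow_le_add_one_rpow_sub_rpow hβ0.le hx0) n.cast_nonneg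
  have hl' := natCast_mul_rpow_neg_inv_mul_rpow hβ0 hn hl
  rw [← hx] at hl'
  linarith

-- The measure is the limit of the laws of `n ^ (-1 / β) (X₁ + ⋯ + Xₙ)`, where the `Xᵢ` are
-- independent with Laplace transform `(l + 1) ^ β - l ^ β = 1 - l ^ β + O(l)`.
lemma exists_laplaceTransform_eq_exp_neg_rpow (hβ0 : 0 < β) (hβ1 : β < 1) :
    ∃ η : Measure ℝ≥0, IsProbabilityMeasure η ∧
      ∀ l : ℝ≥0, laplaceTransform η l = Real.exp (-(l : ℝ) ^ β) := by
  obtain ⟨ρ, _, hρ⟩ := exists_laplaceTransform_eq_add_one_rpow_sub_rpow hβ0 hβ1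
  have hscaled (n : ℕ) : IsProbabilityMeasure (ρ.map ((n : ℝ≥0) ^ (-β⁻¹) * ·)) :=
    Measure.isProbabilityMeasure_map (by fun_prop)
  choose ν hprob hν using fun n : ℕ =>
    exists_laplaceTransform_eq_pow (ρ.map ((n : ℝ≥0) ^ (-β⁻¹) * ·)) n
  simp only [laplaceTransform_map_mul, hρ, NNReal.coe_mul, NNReal.coe_rpow, NNReal.coe_natCast]
    at hν
  have htight : IsTightMeasureSet (range ν) := by
    refine isTightMeasureSet_of_one_sub_laplaceTransform_le (forall_mem_range.2 hprob)
      fun ε hε => ⟨(ε ^ β⁻¹).toNNReal, ?_, forall_mem_range.2 fun n => ?_⟩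
    · rw [Ne, Real.toNNReal_eq_zero, not_le]
      positivity
    · rw [hν, Real.coe_toNNReal _ (by positivity)]
      refine (one_sub_add_one_rpow_sub_rpow_pow_le hβ0 n (by positivity)).trans_eq ?_
      rw [← Real.rpow_mul hε.le, inv_mul_cancel₀ hβ0.ne', Real.rpow_one]
  refine exists_laplaceTransform_eq_of_tendsto htight fun l => ?_
  have := Real.tendsto_one_add_pow_exp_of_tendsto
    (tendsto_natCast_mul_add_one_rpow_sub_rpow_sub_one hβ0 hβ1 l.coe_nonneg)
  simpa only [hν, add_sub_cancel] using this

end StableSubordinator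

section GaussianMixture

variable {V : Type*} [NormedAddCommGroup V] [InnerProductSpace ℝ V] [FiniteDimensional ℝ V]
  [MeasurableSpace V] [BorelSpace V]

lemma laplaceTransform_nonneg (μ : Measure ℝ≥0) (l : ℝ≥0) : 0 ≤ laplaceTransform μ l :=
  integral_nonneg fun _ => Real.exp_nonneg _

lemma integrable_inner_mul_inner_smul_exp_neg_mul_sq_norm {η : Measure ℝ≥0} [IsFiniteMeasure η]
    (hη : Integrable fun v : V => ‖v‖ ^ 2 * laplaceTransform η (‖v‖₊ ^ 2)) (a b : V) :
    Integrable (Function.uncurry fun (s : ℝ≥0) (v : V) =>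
      (⟪v, a⟫ * ⟪v, b⟫) • ((Real.exp (-s * ‖v‖ ^ 2) : ℝ) : ℂ)) (η.prod volume) := by
  have hexp (v : V) := integrable_exp_neg_mul η (‖v‖₊ ^ 2)
  simp only [NNReal.coe_pow, coe_nnnorm, ← neg_mul] at hexp
  have hmeas : Measurable fun v : V => laplaceTransform η (‖v‖₊ ^ 2) :=
    (StronglyMeasurable.integral_prod_left (f := fun (s : ℝ≥0) (v : V) =>
      Real.exp (-(s * (‖v‖₊ ^ 2 : ℝ≥0) : ℝ)))
      (Continuous.stronglyMeasurable (by fun_prop))).measurable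
  refine (integrable_prod_iff' (Continuous.aestronglyMeasurable (by fun_prop))).2
    ⟨ae_of_all _ fun v => ((hexp v).ofReal (𝕜 := ℂ)).smul (⟪v, a⟫ * ⟪v, b⟫), ?_⟩
  have habs (v : V) : ‖laplaceTransform η (‖v‖₊ ^ 2)‖ = laplaceTransform η (‖v‖₊ ^ 2) :=
    Real.norm_of_nonneg (laplaceTransform_nonneg η _)
  have hnorm := (integrable_inner_mul_inner_smul (E := ℝ) hmeas.aestronglyMeasurable
    (by simpa only [habs] using hη) a b).norm
  simp only [norm_smul, habs] at hnorm
  refine hnorm.congr (ae_of_all _ fun v => ?_)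
  simp only [Function.uncurry_apply_pair, norm_smul, Complex.norm_real, integral_const_mul,
    Real.norm_of_nonneg (Real.exp_nonneg _), laplaceTransform, NNReal.coe_pow, coe_nnnorm, neg_mul]

lemma fourierHessNorm_laplaceTransform_sq_norm_lt_top [Nontrivial V] {η : Measure ℝ≥0}
    [IsFiniteMeasure η] (hinv : ∫⁻ s : ℝ≥0, (s : ℝ≥0∞)⁻¹ ∂η < ∞)
    (hη : Integrable fun v : V => ‖v‖ ^ 2 * laplaceTransform η (‖v‖₊ ^ 2)) (a b : V) :
    fourierHessNorm a b (fun v => (laplaceTransform η (‖v‖₊ ^ 2) : ℂ)) < ∞ := by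
  have hpos : ∀ᵐ s : ℝ≥0 ∂η, 0 < s := by
    filter_upwards [ae_lt_top (by fun_prop) hinv.ne] with s hs
    simpa [ENNReal.inv_lt_top] using hs
  calc fourierHessNorm a b (fun v => (laplaceTransform η (‖v‖₊ ^ 2) : ℂ))
      = fourierNorm fun v => ∫ s : ℝ≥0,
          (⟪v, a⟫ * ⟪v, b⟫) • ((Real.exp (-s * ‖v‖ ^ 2) : ℝ) : ℂ) ∂η := by
        simp only [fourierHessNorm, integral_smul, laplaceTransform, integral_complex_ofReal,
          NNReal.coe_pow, coe_nnnorm, neg_mul]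
    _ ≤ ∫⁻ s : ℝ≥0, fourierHessNorm a b (fun v => ((Real.exp (-s * ‖v‖ ^ 2) : ℝ) : ℂ)) ∂η :=
        fourierNorm_integral_le (integrable_inner_mul_inner_smul_exp_neg_mul_sq_norm hη a b)
    _ = ∫⁻ s : ℝ≥0, (s : ℝ≥0∞)⁻¹ *
          fourierHessNorm a b (fun v => ((Real.exp (-1 * ‖v‖ ^ 2) : ℝ) : ℂ)) ∂η := by
        refine lintegral_congr_ae (hpos.mono fun s hs => ?_)
        simp only
        rw [fourierHessNorm_exp_neg_mul_sq_norm (by exact_mod_cast hs),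
          ENNReal.ofReal_inv_of_pos (by exact_mod_cast hs), ENNReal.ofReal_coe_nnreal]
    _ = (∫⁻ s : ℝ≥0, (s : ℝ≥0∞)⁻¹ ∂η) *
          fourierHessNorm a b (fun v => ((Real.exp (-1 * ‖v‖ ^ 2) : ℝ) : ℂ)) :=
        lintegral_mul_const _ (by fun_prop)
    _ < ∞ := ENNReal.mul_lt_top hinv (fourierHessNorm_exp_neg_sq_norm_lt_top a b)

lemma lintegral_inv_lt_top_of_laplaceTransform_eq_exp_neg_rpow {β : ℝ} (hβ : 0 < β)
    {η : Measure ℝ≥0} [IsFiniteMeasure η]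
    (hη : ∀ l : ℝ≥0, laplaceTransform η l = Real.exp (-(l : ℝ) ^ β)) :
    ∫⁻ s : ℝ≥0, (s : ℝ≥0∞)⁻¹ ∂η < ∞ := by
  have hint := integrableOn_rpow_mul_exp_neg_rpow (s := 0) (by norm_num) hβ
  rw [lintegral_inv_eq_lintegral_laplaceTransform]
  refine (Integrable.lintegral_lt_top (hint.congr_fun (fun l (hl : 0 < l) => ?_) measurableSet_Ioi))
  simp only [Real.rpow_zero, one_mul, hη, Real.coe_toNNReal l hl.le]

variable {α : ℝ}

lemma fourierHessNorm_exp_neg_mul_rpow_norm (hα0 : 0 < α) {t : ℝ} (ht : 0 < t) (a b : V) :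
    fourierHessNorm a b (fun v => ((Real.exp (-t * ‖v‖ ^ α) : ℝ) : ℂ)) =
      ENNReal.ofReal (t ^ (-2 / α)) *
        fourierHessNorm a b (fun v => ((Real.exp (-‖v‖ ^ α) : ℝ) : ℂ)) := by
  have hscale (v : V) : -t * ‖v‖ ^ α = -‖t ^ α⁻¹ • v‖ ^ α := by
    rw [norm_smul, Real.norm_of_nonneg (by positivity),
      Real.mul_rpow (by positivity) (norm_nonneg _), ← Real.rpow_mul ht.le,
      inv_mul_cancel₀ hα0.ne', Real.rpow_one, neg_mul]
  have hpow : ((t ^ α⁻¹) ^ 2)⁻¹ = t ^ (-2 / α) := by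
    rw [← Real.rpow_mul_natCast ht.le, ← Real.rpow_neg ht.le]
    ring_nf
  simp only [hscale]
  rw [← hpow, ← fourierHessNorm_comp_smul (Real.rpow_pos_of_pos ht _).ne']

variable [Nontrivial V]

lemma fourierHessNorm_exp_neg_rpow_norm_lt_top (hα0 : 0 < α) (hα2 : α < 2) (a b : V) :
    fourierHessNorm a b (fun v => ((Real.exp (-‖v‖ ^ α) : ℝ) : ℂ)) < ∞ := by
  obtain ⟨η, _, hη⟩ := exists_laplaceTransform_eq_exp_neg_rpow (half_pos hα0)
    ((div_lt_one two_pos).2 hα2)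
  have hinv := lintegral_inv_lt_top_of_laplaceTransform_eq_exp_neg_rpow (half_pos hα0) hη
  have hsymbol (v : V) : laplaceTransform η (‖v‖₊ ^ 2) = Real.exp (-‖v‖ ^ α) := by
    rw [hη, NNReal.coe_pow, coe_nnnorm, ← Real.rpow_natCast_mul (norm_nonneg v), Nat.cast_ofNat,
      mul_div_cancel₀ α two_ne_zero]
  have hint := integrable_norm_pow_mul_exp_neg_mul_rpow (volume : Measure V) 2 hα0 one_pos
  simp only [neg_mul, one_mul, ← hsymbol] at hint
  simpa only [hsymbol] using fourierHessNorm_laplaceTransform_sq_norm_lt_top hinv hint a b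

end GaussianMixture

section LevyExponent

variable {V : Type*} [NormedAddCommGroup V] [InnerProductSpace ℝ V] [MeasurableSpace V]

/-- The characteristic exponent of the driftless pure-jump process with symmetric Lévy
measure `μ`. -/
noncomputable def levyExponent (μ : Measure V) (u : V) : ℝ :=
  ∫ y, (1 - Real.cos ⟪u, y⟫) ∂μ

lemma isFiniteMeasure_restrict_compl_closedBall {V : Type*} [SeminormedAddCommGroup V]
    [MeasurableSpace V] {μ : Measure V} (hμ : Integrable (fun y => min (‖y‖ ^ 2) 1) μ) :
    IsFiniteMeasure (μ.restrict (closedBall 0 1)ᶜ) := by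
  rw [isFiniteMeasure_restrict, ← lt_top_iff_ne_top]
  refine (measure_mono fun y hy => ?_).trans_lt (hμ.measure_norm_ge_lt_top one_pos)
  have hy1 : 1 < ‖y‖ := by simpa using hy
  rw [mem_ofPred_eq, Real.norm_of_nonneg (by positivity), min_eq_right (one_le_pow₀ hy1.le)]

lemma one_sub_cos_inner_le {V : Type*} [SeminormedAddCommGroup V] [InnerProductSpace ℝ V]
    (u y : V) : 1 - Real.cos ⟪u, y⟫ ≤ (2 + ‖u‖ ^ 2) * min (‖y‖ ^ 2) 1 := by
  have hquad : 1 - Real.cos ⟪u, y⟫ ≤ ⟪u, y⟫ ^ 2 / 2 := by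
    linarith [Real.one_sub_sq_div_two_le_cos (x := ⟪u, y⟫)]
  have hcs : ⟪u, y⟫ ^ 2 ≤ ‖u‖ ^ 2 * ‖y‖ ^ 2 := by
    rw [← mul_pow, ← sq_abs]
    gcongr
    exact abs_real_inner_le_norm u y
  rw [mul_min_of_nonneg _ _ (by positivity)]
  refine le_min (by nlinarith [sq_nonneg ‖y‖]) ?_
  nlinarith [Real.neg_one_le_cos ⟪u, y⟫, sq_nonneg ‖u‖]

variable [BorelSpace V] {μ : Measure V}

lemma integrable_one_sub_cos (hμ : Integrable (fun y => min (‖y‖ ^ 2) 1) μ)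
    (u : V) : Integrable (fun y => 1 - Real.cos ⟪u, y⟫) μ := by
  refine (hμ.const_mul (2 + ‖u‖ ^ 2)).mono' (Continuous.aestronglyMeasurable (by fun_prop))
    (ae_of_all _ fun y => ?_)
  rw [Real.norm_of_nonneg (sub_nonneg.2 (Real.cos_le_one _))]
  exact one_sub_cos_inner_le u y

lemma continuous_levyExponent (hμ : Integrable (fun y => min (‖y‖ ^ 2) 1) μ) :
    Continuous (levyExponent μ) := by
  refine continuous_iff_continuousAt.2 fun u₀ => ?_
  refine continuousAt_of_dominated (bound := fun y => (2 + (‖u₀‖ + 1) ^ 2) * min (‖y‖ ^ 2) 1)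
    (Eventually.of_forall fun u => Continuous.aestronglyMeasurable (by fun_prop)) ?_
    (hμ.const_mul _) (ae_of_all _ fun y => Continuous.continuousAt (by fun_prop))
  have hnear : ∀ᶠ u in 𝓝 u₀, ‖u‖ ≤ ‖u₀‖ + 1 :=
    continuous_norm.continuousAt.eventually_le_const (lt_add_one ‖u₀‖)
  filter_upwards [hnear] with u hu
  refine ae_of_all _ fun y => ?_
  rw [Real.norm_of_nonneg (sub_nonneg.2 (Real.cos_le_one _))]
  exact (one_sub_cos_inner_le u y).trans (by gcongr)

lemma levyExponent_eq_sub_integral_cos (k : Measure V) [IsFiniteMeasure k]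
    (u : V) : levyExponent k u = k.real univ - ∫ y, Real.cos ⟪u, y⟫ ∂k := by
  have hcos : Integrable (fun y => Real.cos ⟪u, y⟫) k :=
    .of_bound (Continuous.aestronglyMeasurable (by fun_prop)) 1
      (ae_of_all _ fun y => Real.abs_cos_le_one _)
  rw [levyExponent, integral_sub (integrable_const 1) hcos]
  simp

lemma levyExponent_restrict_add_restrict_compl
    (hμ : Integrable (fun y => min (‖y‖ ^ 2) 1) μ) {s : Set V} (hs : MeasurableSet s) (u : V) :
    levyExponent (μ.restrict s) u + levyExponent (μ.restrict sᶜ) u = levyExponent μ u :=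
  integral_add_compl hs (integrable_one_sub_cos hμ u)

end LevyExponent

section StableLevyMeasure

variable (V : Type*) [NormedAddCommGroup V] [InnerProductSpace ℝ V]
  [MeasurableSpace V] [BorelSpace V] [FiniteDimensional ℝ V]

/-- The Lévy measure `|y| ^ (-(d + α)) dy` of the isotropic `α`-stable process in dimension `d`. -/
noncomputable def stableLevyMeasure (α : ℝ) : Measure V :=
  volume.withDensity fun y => ENNReal.ofReal (‖y‖ ^ ((Module.finrank ℝ V : ℝ) + α))⁻¹

variable {V} {α : ℝ}

lemma setIntegral_stableLevyMeasure (α : ℝ) {s : Set V} (hs : MeasurableSet s) (f : V → ℝ) :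
    ∫ y in s, f y ∂stableLevyMeasure V α =
      ∫ y in s, f y / ‖y‖ ^ ((Module.finrank ℝ V : ℝ) + α) := by
  rw [stableLevyMeasure, setIntegral_withDensity_eq_setIntegral_toReal_smul (by fun_prop)
    (ae_of_all _ fun _ => ENNReal.ofReal_lt_top) _ hs]
  refine setIntegral_congr_fun hs fun y _ => ?_
  rw [ENNReal.toReal_ofReal (by positivity), smul_eq_mul, inv_mul_eq_div]

lemma levyExponent_stableLevyMeasure (α : ℝ) (u : V) :
    levyExponent (stableLevyMeasure V α) u =
      ∫ y, (1 - Real.cos ⟪u, y⟫) / ‖y‖ ^ ((Module.finrank ℝ V : ℝ) + α) := by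
  simpa only [levyExponent, setIntegral_univ] using
    setIntegral_stableLevyMeasure α .univ fun y => 1 - Real.cos ⟪u, y⟫

lemma integrable_min_sq_norm_one_stableLevyMeasure [Nontrivial V] (hα0 : 0 < α) (hα2 : α < 2) :
    Integrable (fun y : V => min (‖y‖ ^ 2) 1) (stableLevyMeasure V α) := by
  rw [stableLevyMeasure, integrable_withDensity_iff_integrable_smul' (by fun_prop)
    (ae_of_all _ fun _ => ENNReal.ofReal_lt_top)]
  have hdensity (y : V) : (ENNReal.ofReal (‖y‖ ^ ((Module.finrank ℝ V : ℝ) + α))⁻¹).toReal =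
      (‖y‖ ^ ((Module.finrank ℝ V : ℝ) + α))⁻¹ := ENNReal.toReal_ofReal (by positivity)
  simp only [hdensity, smul_eq_mul]
  rw [integrable_fun_norm_addHaar (μ := (volume : Measure V))
    (f := fun r => (r ^ ((Module.finrank ℝ V : ℝ) + α))⁻¹ * min (r ^ 2) 1)]
  refine (integrableOn_min_rpow_one_mul_rpow hα0 hα2).congr_fun (fun r (hr : 0 < r) => ?_)
    measurableSet_Ioi
  have hpow : r ^ (Module.finrank ℝ V - 1) * (r ^ ((Module.finrank ℝ V : ℝ) + α))⁻¹ =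
      r ^ (-1 - α) := by
    rw [← Real.rpow_natCast, ← Real.rpow_neg hr.le, ← Real.rpow_add hr,
      Nat.cast_pred Module.finrank_pos]
    ring_nf
  simp only [smul_eq_mul, Real.rpow_two]
  rw [← mul_assoc, hpow, mul_comm]

lemma levyExponent_stableLevyMeasure_of_norm_eq (α : ℝ) {u v : V} (h : ‖u‖ = ‖v‖) :
    levyExponent (stableLevyMeasure V α) u = levyExponent (stableLevyMeasure V α) v := by
  let R := (Submodule.span ℝ {u - v})ᗮ.reflection
  have hR : R u = v := Submodule.reflection_sub h
  rw [levyExponent_stableLevyMeasure, levyExponent_stableLevyMeasure, ← hR,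
    ← R.measurePreserving.integral_comp R.toHomeomorph.measurableEmbedding
      (fun y => (1 - Real.cos ⟪R u, y⟫) / ‖y‖ ^ ((Module.finrank ℝ V : ℝ) + α))]
  simp only [LinearIsometryEquiv.inner_map_map, LinearIsometryEquiv.norm_map]

lemma levyExponent_stableLevyMeasure_smul (α : ℝ) {r : ℝ} (hr : 0 < r) (u : V) :
    levyExponent (stableLevyMeasure V α) (r • u) =
      r ^ α * levyExponent (stableLevyMeasure V α) u := by
  have hscale (y : V) : (1 - Real.cos ⟪r • u, y⟫) / ‖y‖ ^ ((Module.finrank ℝ V : ℝ) + α) =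
      r ^ ((Module.finrank ℝ V : ℝ) + α) *
        ((1 - Real.cos ⟪u, r • y⟫) / ‖r • y‖ ^ ((Module.finrank ℝ V : ℝ) + α)) := by
    rw [norm_smul, Real.norm_of_nonneg hr.le, real_inner_smul_left, real_inner_smul_right,
      Real.mul_rpow hr.le (norm_nonneg _), ← mul_div_assoc, mul_div_mul_left _ _ (by positivity)]
  simp only [levyExponent_stableLevyMeasure, hscale]
  rw [integral_const_mul, Measure.integral_comp_smul volume (fun y =>
      (1 - Real.cos ⟪u, y⟫) / ‖y‖ ^ ((Module.finrank ℝ V : ℝ) + α)) r, smul_eq_mul, ← mul_assoc,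
    abs_of_pos (by positivity), Real.rpow_add hr, Real.rpow_natCast]
  field_simp

lemma stableLevyMeasure_pos_of_isOpen (α : ℝ) {s : Set V} (hs : IsOpen s) (hne : s.Nonempty)
    (h0 : (0 : V) ∉ s) : 0 < stableLevyMeasure V α s := by
  rw [pos_iff_ne_zero, stableLevyMeasure, Ne, withDensity_apply_eq_zero (by fun_prop),
    inter_eq_right.2]
  · exact hs.measure_ne_zero volume hne
  · intro y hy
    have hy0 : 0 < ‖y‖ := norm_pos_iff.2 (ne_of_mem_of_not_mem hy h0)
    exact (ENNReal.ofReal_pos.2 (by positivity)).ne'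

lemma levyExponent_stableLevyMeasure_pos (hα0 : 0 < α) (hα2 : α < 2) {u : V} (hu : u ≠ 0) :
    0 < levyExponent (stableLevyMeasure V α) u := by
  have : Nontrivial V := nontrivial_of_ne u 0 hu
  rw [levyExponent, integral_pos_iff_support_of_nonneg
    (fun y => sub_nonneg.2 (Real.cos_le_one _))
    (integrable_one_sub_cos (integrable_min_sq_norm_one_stableLevyMeasure hα0 hα2) u)]
  have hinner : Continuous fun y : V => ⟪u, y⟫ := by fun_prop
  have hslab : IsOpen {y : V | 0 < ⟪u, y⟫ ∧ ⟪u, y⟫ < 2} :=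
    (isOpen_lt continuous_const hinner).and (isOpen_lt hinner continuous_const)
  have hne : {y : V | 0 < ⟪u, y⟫ ∧ ⟪u, y⟫ < 2}.Nonempty := by
    refine ⟨(‖u‖ ^ 2)⁻¹ • u, ?_⟩
    have hu0 : ‖u‖ ≠ 0 := norm_ne_zero_iff.2 hu
    simp [real_inner_smul_right, hu0]
  refine (stableLevyMeasure_pos_of_isOpen α hslab hne (by simp)).trans_le
    (measure_mono fun y ⟨hy0, hy2⟩ => ?_)
  have hcos : Real.cos ⟪u, y⟫ < Real.cos 0 :=
    Real.cos_lt_cos_of_nonneg_of_le_pi le_rfl (by linarith [Real.pi_gt_three]) hy0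
  rw [Real.cos_zero] at hcos
  exact (sub_pos.2 hcos).ne'

lemma exists_levyExponent_stableLevyMeasure_eq [Nontrivial V] (hα0 : 0 < α) (hα2 : α < 2) :
    ∃ A : ℝ, 0 < A ∧ ∀ u : V, levyExponent (stableLevyMeasure V α) u = A * ‖u‖ ^ α := by
  obtain ⟨e, he⟩ : ∃ e : V, ‖e‖ = 1 := exists_norm_eq V zero_le_one
  refine ⟨levyExponent (stableLevyMeasure V α) e, levyExponent_stableLevyMeasure_pos hα0 hα2
    (norm_ne_zero_iff.1 (by simp [he])), fun u => ?_⟩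
  rcases eq_or_ne u 0 with rfl | hu
  · simp [levyExponent, Real.zero_rpow hα0.ne']
  · rw [levyExponent_stableLevyMeasure_of_norm_eq α (v := ‖u‖ • e) (by simp [norm_smul, he]),
      levyExponent_stableLevyMeasure_smul α (norm_pos_iff.2 hu), mul_comm]

end StableLevyMeasure

section TruncatedSymbol

variable {V : Type*} [NormedAddCommGroup V] [InnerProductSpace ℝ V] [MeasurableSpace V]
  [BorelSpace V] {μ : Measure V}

lemma exp_neg_mul_levyExponent_restrict_closedBall
    (hμ : Integrable (fun y => min (‖y‖ ^ 2) 1) μ) (t : ℝ) (u : V) :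
    Real.exp (-t * levyExponent (μ.restrict (closedBall 0 1)) u) =
      Real.exp (t * μ.real (closedBall 0 1)ᶜ) *
        (Real.exp (-t * ∫ y in (closedBall 0 1)ᶜ, Real.cos ⟪u, y⟫ ∂μ) *
          Real.exp (-t * levyExponent μ u)) := by
  have := isFiniteMeasure_restrict_compl_closedBall hμ
  rw [← levyExponent_restrict_add_restrict_compl hμ (measurableSet_closedBall (x := 0) (ε := 1)) u,
    levyExponent_eq_sub_integral_cos (μ.restrict (closedBall 0 1)ᶜ),
    measureReal_restrict_apply_univ, ← Real.exp_add, ← Real.exp_add]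
  ring_nf

lemma exp_neg_mul_levyExponent_restrict_closedBall_le
    (hμ : Integrable (fun y => min (‖y‖ ^ 2) 1) μ) {t : ℝ} (ht : 0 ≤ t) (u : V) :
    Real.exp (-t * levyExponent (μ.restrict (closedBall 0 1)) u) ≤
      Real.exp (2 * t * μ.real (closedBall 0 1)ᶜ) * Real.exp (-t * levyExponent μ u) := by
  have := isFiniteMeasure_restrict_compl_closedBall hμ
  have hcos := abs_integral_cos_le (μ.restrict (closedBall 0 1)ᶜ) u
  rw [measureReal_restrict_apply_univ] at hcos
  rw [exp_neg_mul_levyExponent_restrict_closedBall hμ, ← mul_assoc, ← Real.exp_add]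
  gcongr
  nlinarith [neg_abs_le (∫ y in (closedBall 0 1)ᶜ, Real.cos ⟪u, y⟫ ∂μ)]

lemma integrable_norm_pow_mul_exp_neg_mul_levyExponent_restrict_closedBall {ν : Measure V}
    (hμ : Integrable (fun y => min (‖y‖ ^ 2) 1) μ) {t : ℝ} (ht : 0 ≤ t) {n : ℕ}
    (hint : Integrable (fun u => ‖u‖ ^ n * Real.exp (-t * levyExponent μ u)) ν) :
    Integrable (fun u =>
      ‖u‖ ^ n * Real.exp (-t * levyExponent (μ.restrict (closedBall 0 1)) u)) ν := by
  have hcont := continuous_levyExponent (hμ.restrict (s := closedBall 0 1))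
  refine (hint.const_mul (Real.exp (2 * t * μ.real (closedBall 0 1)ᶜ))).mono'
    (Continuous.aestronglyMeasurable (by fun_prop)) (ae_of_all _ fun u => ?_)
  rw [Real.norm_of_nonneg (by positivity), mul_left_comm]
  gcongr
  exact exp_neg_mul_levyExponent_restrict_closedBall_le hμ ht u

lemma fourierHessNorm_exp_neg_mul_levyExponent_restrict_closedBall_le [FiniteDimensional ℝ V]
    (hμ : Integrable (fun y => min (‖y‖ ^ 2) 1) μ) {t : ℝ} (ht : 0 ≤ t)
    (hint : Integrable fun u => ‖u‖ ^ 2 * Real.exp (-t * levyExponent μ u)) (a b : V) :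
    fourierHessNorm a b (fun u =>
        ((Real.exp (-t * levyExponent (μ.restrict (closedBall 0 1)) u) : ℝ) : ℂ)) ≤
      ENNReal.ofReal (Real.exp (2 * t * μ.real (closedBall 0 1)ᶜ)) *
        fourierHessNorm a b (fun u => ((Real.exp (-t * levyExponent μ u) : ℝ) : ℂ)) := by
  have := isFiniteMeasure_restrict_compl_closedBall hμ
  have hcont := continuous_levyExponent hμ
  have hhess : Integrable fun u =>
      (⟪u, a⟫ * ⟪u, b⟫) • ((Real.exp (-t * levyExponent μ u) : ℝ) : ℂ) :=
    integrable_inner_mul_inner_smul (Continuous.aestronglyMeasurable (by fun_prop))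
      (by simpa [-Complex.ofReal_exp] using hint) a b
  have hsplit (u : V) : (⟪u, a⟫ * ⟪u, b⟫) •
      ((Real.exp (-t * levyExponent (μ.restrict (closedBall 0 1)) u) : ℝ) : ℂ) =
      Real.exp (t * μ.real (closedBall 0 1)ᶜ) •
        Real.exp (-t * ∫ y in (closedBall 0 1)ᶜ, Real.cos ⟪u, y⟫ ∂μ) •
          (⟪u, a⟫ * ⟪u, b⟫) • ((Real.exp (-t * levyExponent μ u) : ℝ) : ℂ) := by
    rw [exp_neg_mul_levyExponent_restrict_closedBall hμ]
    simp only [Complex.real_smul]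
    push_cast
    ring
  have hexp := fourierNorm_exp_integral_cos_smul_le (k := μ.restrict (closedBall 0 1)ᶜ) hhess (-t)
  rw [abs_neg, abs_of_nonneg ht, measureReal_restrict_apply_univ] at hexp
  simp only [fourierHessNorm, hsplit, fourierNorm_const_smul]
  refine (mul_le_mul_right hexp _).trans_eq ?_
  rw [Real.enorm_of_nonneg (Real.exp_nonneg _), ← mul_assoc,
    ← ENNReal.ofReal_mul (Real.exp_nonneg _), ← Real.exp_add, ← two_mul, mul_assoc]

end TruncatedSymbol

section CosineInversion

variable {V : Type*} [NormedAddCommGroup V] [InnerProductSpace ℝ V] [FiniteDimensional ℝ V]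
  [MeasurableSpace V] [BorelSpace V]

lemma fderiv_fderiv_re_fourier_apply {f : V → ℂ} (hfm : AEStronglyMeasurable f)
    (hf : ∀ n ≤ 2, Integrable fun v => ‖v‖ ^ n * ‖f v‖) (a b x : V) :
    fderiv ℝ (fun z => fderiv ℝ (fun w => (𝓕 f w).re) z a) x b =
      -(2 * Real.pi) ^ 2 * (𝓕 (fun v => (⟪v, a⟫ * ⟪v, b⟫) • f v) x).re := by
  have hC2 : ContDiff ℝ 2 (𝓕 f) :=
    Real.contDiff_fourier (N := 2) fun n hn => hf n (by exact_mod_cast hn)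
  have hre {F : V → ℂ} (hF : Differentiable ℝ F) (z c : V) :
      fderiv ℝ (fun w => (F w).re) z c = (fderiv ℝ F z c).re := by
    have h : HasFDerivAt (fun w => (F w).re) (Complex.reCLM ∘L fderiv ℝ F z) z :=
      Complex.reCLM.hasFDerivAt.comp z (hF z).hasFDerivAt
    rw [h.fderiv, ContinuousLinearMap.comp_apply, Complex.reCLM_apply]
  simp only [hre (hC2.differentiable two_ne_zero)]
  have hD : Differentiable ℝ fun z => fderiv ℝ (𝓕 f) z a :=
    ((hC2.fderiv_right (m := 1) le_rfl).clm_apply contDiff_const).differentiable one_ne_zero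
  rw [hre hD, fderiv_fderiv_fourier_apply hfm hf, Complex.smul_re, smul_eq_mul]

/-- The Fourier inversion integral of an even real symbol `g`, in the angular frequency
normalisation `x ↦ (2π)⁻ᵈ ∫ cos ⟪x, u⟫ g u du`. -/
noncomputable def cosineInversion (g : V → ℝ) (x : V) : ℝ :=
  ((2 * Real.pi) ^ Module.finrank ℝ V)⁻¹ * ∫ u, Real.cos ⟪x, u⟫ * g u

lemma cosineInversion_eq_re_fourier {g : V → ℝ} (hg : Integrable g) :
    cosineInversion g = fun x => (𝓕 (fun v => (g ((2 * Real.pi) • v) : ℂ)) x).re := by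
  ext x
  have hG : Integrable fun v => (g ((2 * Real.pi) • v) : ℂ) :=
    (hg.comp_smul Real.two_pi_pos.ne').ofReal
  have hre (v : V) : (𝐞 (-⟪v, x⟫) • (g ((2 * Real.pi) • v) : ℂ)).re =
      Real.cos ⟪x, (2 * Real.pi) • v⟫ * g ((2 * Real.pi) • v) := by
    rw [Circle.smul_def, Real.fourierChar_apply, smul_eq_mul, Complex.re_mul_ofReal,
      Complex.exp_ofReal_mul_I_re, mul_neg, Real.cos_neg, real_inner_smul_right, real_inner_comm]
  have hint : Integrable fun v => 𝐞 (-⟪v, x⟫) • (g ((2 * Real.pi) • v) : ℂ) :=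
    (Real.fourierIntegral_convergent_iff x).2 hG
  have hcomm := integral_re hint
  simp only [RCLike.re_eq_complex_re, hre] at hcomm
  rw [Real.fourier_eq, ← hcomm,
    Measure.integral_comp_smul volume (fun u => Real.cos ⟪x, u⟫ * g u), smul_eq_mul,
    abs_of_pos (by positivity), cosineInversion]

lemma integrable_norm_pow_mul_norm_comp_smul {E : Type*} [NormedAddCommGroup E] {g : V → E}
    {n : ℕ} (hg : Integrable fun v => ‖v‖ ^ n * ‖g v‖) {c : ℝ} (hc : c ≠ 0) :
    Integrable fun v => ‖v‖ ^ n * ‖g (c • v)‖ := by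
  refine ((hg.comp_smul hc).const_mul (‖c‖ ^ n)⁻¹).congr (ae_of_all _ fun v => ?_)
  have hc' : ‖c‖ ^ n ≠ 0 := pow_ne_zero n (norm_ne_zero_iff.2 hc)
  simp only [norm_smul, mul_pow]
  field_simp

lemma contDiff_two_cosineInversion {g : V → ℝ} (hgm : AEStronglyMeasurable g)
    (hg : ∀ n ≤ 2, Integrable fun u => ‖u‖ ^ n * ‖g u‖) : ContDiff ℝ 2 (cosineInversion g) := by
  have hg0 : Integrable g := (integrable_norm_iff hgm).1 (by simpa using hg 0 zero_le_two)
  rw [cosineInversion_eq_re_fourier hg0]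
  refine Complex.reCLM.contDiff.comp (Real.contDiff_fourier (N := 2) fun n hn => ?_)
  simpa using integrable_norm_pow_mul_norm_comp_smul (hg n (by exact_mod_cast hn))
    Real.two_pi_pos.ne'

lemma fderiv_fderiv_cosineInversion_apply {g : V → ℝ} (hgm : AEStronglyMeasurable g)
    (hg : ∀ n ≤ 2, Integrable fun u => ‖u‖ ^ n * ‖g u‖) (a b x : V) :
    fderiv ℝ (fun z => fderiv ℝ (cosineInversion g) z a) x b = -(2 * Real.pi) ^ 2 *
      (𝓕 (fun v => (⟪v, a⟫ * ⟪v, b⟫) • (g ((2 * Real.pi) • v) : ℂ)) x).re := by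
  have hg0 : Integrable g := (integrable_norm_iff hgm).1 (by simpa using hg 0 zero_le_two)
  rw [cosineInversion_eq_re_fourier hg0]
  refine fderiv_fderiv_re_fourier_apply (hg0.comp_smul Real.two_pi_pos.ne').ofReal.1
    (fun n hn => ?_) a b x
  simpa using integrable_norm_pow_mul_norm_comp_smul (hg n hn) Real.two_pi_pos.ne'

lemma continuous_fderiv_fderiv_cosineInversion_apply {g : V → ℝ} (hgm : AEStronglyMeasurable g)
    (hg : ∀ n ≤ 2, Integrable fun u => ‖u‖ ^ n * ‖g u‖) (a b : V) :
    Continuous fun x => fderiv ℝ (fun z => fderiv ℝ (cosineInversion g) z a) x b :=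
  (((contDiff_two_cosineInversion hgm hg).fderiv_right (m := 1) le_rfl).clm_apply
    contDiff_const).continuous_fderiv_apply one_ne_zero |>.comp
      (continuous_id.prodMk continuous_const)

lemma lintegral_enorm_fderiv_fderiv_cosineInversion_le {g : V → ℝ} (hgm : AEStronglyMeasurable g)
    (hg : ∀ n ≤ 2, Integrable fun u => ‖u‖ ^ n * ‖g u‖) (a b : V) :
    ∫⁻ x, ‖fderiv ℝ (fun z => fderiv ℝ (cosineInversion g) z a) x b‖ₑ ≤
      fourierHessNorm a b (fun u => (g u : ℂ)) := by
  have hpi : ENNReal.ofReal ((2 * Real.pi) ^ 2) ≠ 0 := (ENNReal.ofReal_pos.2 (by positivity)).ne'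
  calc ∫⁻ x, ‖fderiv ℝ (fun z => fderiv ℝ (cosineInversion g) z a) x b‖ₑ
      ≤ ∫⁻ x, ENNReal.ofReal ((2 * Real.pi) ^ 2) *
          ‖𝓕 (fun v => (⟪v, a⟫ * ⟪v, b⟫) • (g ((2 * Real.pi) • v) : ℂ)) x‖ₑ := by
        refine lintegral_mono fun x => ?_
        rw [fderiv_fderiv_cosineInversion_apply hgm hg, enorm_mul, enorm_neg,
          Real.enorm_of_nonneg (by positivity)]
        gcongr
        exact enorm_le_iff_norm_le.2 (Complex.abs_re_le_norm _)
    _ = ENNReal.ofReal ((2 * Real.pi) ^ 2) *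
          fourierHessNorm a b (fun v => (g ((2 * Real.pi) • v) : ℂ)) :=
        lintegral_const_mul' _ _ ENNReal.ofReal_ne_top
    _ = fourierHessNorm a b (fun u => (g u : ℂ)) := by
        rw [fourierHessNorm_comp_smul Real.two_pi_pos.ne' a b (fun u => (g u : ℂ)),
          ENNReal.ofReal_inv_of_pos (by positivity), ← mul_assoc,
          ENNReal.mul_inv_cancel hpi ENNReal.ofReal_ne_top, one_mul]

lemma integrable_fderiv_fderiv_cosineInversion_apply {g : V → ℝ} (hgm : AEStronglyMeasurable g)
    (hg : ∀ n ≤ 2, Integrable fun u => ‖u‖ ^ n * ‖g u‖) {a b : V}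
    (hfin : fourierHessNorm a b (fun u => (g u : ℂ)) < ∞) :
    Integrable fun x => fderiv ℝ (fun z => fderiv ℝ (cosineInversion g) z a) x b :=
  ⟨(continuous_fderiv_fderiv_cosineInversion_apply hgm hg a b).aestronglyMeasurable,
    (lintegral_enorm_fderiv_fderiv_cosineInversion_le hgm hg a b).trans_lt hfin⟩

end CosineInversion

section TruncatedStable

variable {V : Type*} [NormedAddCommGroup V] [InnerProductSpace ℝ V] [FiniteDimensional ℝ V]
  [Nontrivial V] [MeasurableSpace V] [BorelSpace V] {α t : ℝ}

/-- The characteristic function at time `t` of the isotropic `α`-stable process on `V` with its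
jumps of norm greater than `1` removed. -/
noncomputable def truncatedStableCharFun (α t : ℝ) (u : V) : ℝ :=
  Real.exp (-t * levyExponent ((stableLevyMeasure V α).restrict (closedBall 0 1)) u)

lemma continuous_truncatedStableCharFun (hα0 : 0 < α) (hα2 : α < 2) :
    Continuous (truncatedStableCharFun (V := V) α t) := by
  have hcont := continuous_levyExponent
    ((integrable_min_sq_norm_one_stableLevyMeasure (V := V) hα0 hα2).restrict (s := closedBall 0 1))
  unfold truncatedStableCharFun
  fun_prop

lemma integrable_norm_pow_mul_exp_neg_mul_levyExponent_stableLevyMeasure (hα0 : 0 < α)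
    (hα2 : α < 2) (ht : 0 < t) (n : ℕ) :
    Integrable fun u : V => ‖u‖ ^ n * Real.exp (-t * levyExponent (stableLevyMeasure V α) u) := by
  obtain ⟨A, hA, hsymbol⟩ := exists_levyExponent_stableLevyMeasure_eq (V := V) hα0 hα2
  simpa only [hsymbol, neg_mul, mul_assoc] using
    integrable_norm_pow_mul_exp_neg_mul_rpow (volume : Measure V) n hα0 (mul_pos ht hA)

lemma integrable_norm_pow_mul_norm_truncatedStableCharFun (hα0 : 0 < α) (hα2 : α < 2) (ht : 0 < t)
    (n : ℕ) : Integrable fun u : V => ‖u‖ ^ n * ‖truncatedStableCharFun α t u‖ := by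
  simpa only [truncatedStableCharFun, Real.norm_of_nonneg (Real.exp_nonneg _)] using
    integrable_norm_pow_mul_exp_neg_mul_levyExponent_restrict_closedBall
      (integrable_min_sq_norm_one_stableLevyMeasure hα0 hα2) ht.le
      (integrable_norm_pow_mul_exp_neg_mul_levyExponent_stableLevyMeasure hα0 hα2 ht n)

lemma exists_fourierHessNorm_exp_neg_mul_levyExponent_stableLevyMeasure_eq (hα0 : 0 < α)
    (hα2 : α < 2) (a b : V) : ∃ C : ℝ, ∀ t : ℝ, 0 < t →
      fourierHessNorm a b (fun u =>
        ((Real.exp (-t * levyExponent (stableLevyMeasure V α) u) : ℝ) : ℂ)) =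
        ENNReal.ofReal (C * t ^ (-(2 / α))) := by
  obtain ⟨A, hA, hsymbol⟩ := exists_levyExponent_stableLevyMeasure_eq (V := V) hα0 hα2
  have hfin := fourierHessNorm_exp_neg_rpow_norm_lt_top hα0 hα2 a b
  refine ⟨A ^ (-(2 / α)) * (fourierHessNorm a b
    (fun v => ((Real.exp (-‖v‖ ^ α) : ℝ) : ℂ))).toReal, fun t ht => ?_⟩
  have hscale := fourierHessNorm_exp_neg_mul_rpow_norm hα0 (mul_pos ht hA) a b
  simp only [neg_mul, mul_assoc] at hscale
  simp only [hsymbol, neg_mul]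
  rw [hscale, mul_right_comm, ENNReal.ofReal_mul (by positivity), ENNReal.ofReal_toReal hfin.ne,
    Real.mul_rpow ht.le hA.le, mul_comm (t ^ _), neg_div]

lemma exists_fourierHessNorm_truncatedStableCharFun_le (hα0 : 0 < α) (hα2 : α < 2) (T : ℝ)
    (a b : V) : ∃ C : ℝ, ∀ t : ℝ, 0 < t → t ≤ T →
      fourierHessNorm a b (fun u => (truncatedStableCharFun α t u : ℂ)) ≤
        ENNReal.ofReal (C * t ^ (-(2 / α))) := by
  obtain ⟨C, hC⟩ := exists_fourierHessNorm_exp_neg_mul_levyExponent_stableLevyMeasure_eq hα0 hα2 a b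
  refine ⟨Real.exp (2 * T * (stableLevyMeasure V α).real (closedBall 0 1)ᶜ) * C,
    fun t ht htT => ?_⟩
  have hbound := fourierHessNorm_exp_neg_mul_levyExponent_restrict_closedBall_le
    (integrable_min_sq_norm_one_stableLevyMeasure hα0 hα2) ht.le
    (integrable_norm_pow_mul_exp_neg_mul_levyExponent_stableLevyMeasure hα0 hα2 ht 2) a b
  refine hbound.trans ?_
  rw [hC t ht, mul_assoc (Real.exp _) C, ENNReal.ofReal_mul (Real.exp_nonneg _)]
  gcongr

end TruncatedStable

lemma Psi_eq_levyExponent (d : ℕ) (α : ℝ) (u : EuclideanSpace ℝ (Fin d)) :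
    Psi d α u = levyExponent ((stableLevyMeasure _ α).restrict (closedBall 0 1)) u := by
  rw [levyExponent, setIntegral_stableLevyMeasure α measurableSet_closedBall,
    finrank_euclideanSpace_fin, Psi]

lemma pdens_eq_cosineInversion (d : ℕ) (α t : ℝ) :
    pdens d α t = cosineInversion (truncatedStableCharFun α t) := by
  ext x
  simp only [pdens, cosineInversion, truncatedStableCharFun, Psi_eq_levyExponent,
    finrank_euclideanSpace_fin]

lemma contDiff_two_pdens {d : ℕ} (hd : 0 < d) {α t : ℝ} (hα0 : 0 < α) (hα2 : α < 2) (ht : 0 < t) :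
    ContDiff ℝ 2 (pdens d α t) := by
  have : Nonempty (Fin d) := ⟨⟨0, hd⟩⟩
  rw [pdens_eq_cosineInversion]
  exact contDiff_two_cosineInversion
    (continuous_truncatedStableCharFun hα0 hα2).aestronglyMeasurable
    fun n _ => integrable_norm_pow_mul_norm_truncatedStableCharFun hα0 hα2 ht n

lemma exists_integral_abs_fderiv_fderiv_pdens_le {d : ℕ} (hd : 0 < d) {α : ℝ} (hα0 : 0 < α)
    (hα2 : α < 2) (T : ℝ) (a b : EuclideanSpace ℝ (Fin d)) : ∃ C : ℝ, ∀ t : ℝ, 0 < t → t ≤ T →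
      Integrable (fun x => fderiv ℝ (fun z => fderiv ℝ (pdens d α t) z a) x b) ∧
      ∫ x, |fderiv ℝ (fun z => fderiv ℝ (pdens d α t) z a) x b| ≤ C * t ^ (-(2 / α)) := by
  have : Nonempty (Fin d) := ⟨⟨0, hd⟩⟩
  obtain ⟨C, hC⟩ := exists_fourierHessNorm_truncatedStableCharFun_le hα0 hα2 T a b
  refine ⟨max C 0, fun t ht htT => ?_⟩
  have hgm := (continuous_truncatedStableCharFun (V := EuclideanSpace ℝ (Fin d)) (t := t)
    hα0 hα2).aestronglyMeasurable (μ := volume)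
  have hg (n : ℕ) (_ : n ≤ 2) := integrable_norm_pow_mul_norm_truncatedStableCharFun
    (V := EuclideanSpace ℝ (Fin d)) hα0 hα2 ht n
  have hint := integrable_fderiv_fderiv_cosineInversion_apply hgm hg
    ((hC t ht htT).trans_lt ENNReal.ofReal_lt_top)
  rw [← pdens_eq_cosineInversion] at hint
  refine ⟨hint, ?_⟩
  simp only [← Real.norm_eq_abs]
  rw [integral_norm_eq_lintegral_enorm hint.1]
  refine ENNReal.toReal_le_of_le_ofReal (by positivity) ?_
  rw [pdens_eq_cosineInversion]
  calc _ ≤ _ := lintegral_enorm_fderiv_fderiv_cosineInversion_le hgm hg a b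
    _ ≤ ENNReal.ofReal (C * t ^ (-(2 / α))) := hC t ht htT
    _ ≤ ENNReal.ofReal (max C 0 * t ^ (-(2 / α))) := by
      gcongr
      exact le_max_left C 0

theorem stmt_6_general (d : ℕ) (hd : 0 < d) (α T : ℝ) (hα0 : 0 < α) (hα2 : α < 2) :
    (∀ t : ℝ, 0 < t → t ≤ T → ContDiff ℝ 2 (pdens d α t)) ∧
    ∃ C : ℝ, ∀ t : ℝ, 0 < t → t ≤ T → ∀ i j : Fin d,
      Integrable (fun x : EuclideanSpace ℝ (Fin d) =>
        fderiv ℝ (fun z => fderiv ℝ (pdens d α t) z (EuclideanSpace.single i 1)) x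
          (EuclideanSpace.single j 1)) ∧
      (∫ x : EuclideanSpace ℝ (Fin d),
          |fderiv ℝ (fun z => fderiv ℝ (pdens d α t) z (EuclideanSpace.single i 1)) x
            (EuclideanSpace.single j 1)|) ≤
        C * t ^ (-(2 / α)) := by
  refine ⟨fun t ht _ => contDiff_two_pdens hd hα0 hα2 ht, ?_⟩
  choose C hC using exists_integral_abs_fderiv_fderiv_pdens_le hd hα0 hα2 T
  obtain ⟨M, hM⟩ := (finite_range fun p : Fin d × Fin d =>
    C (EuclideanSpace.single p.1 1) (EuclideanSpace.single p.2 1)).bddAbove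
  refine ⟨M, fun t ht htT i j => ?_⟩
  obtain ⟨hint, hle⟩ := hC _ _ t ht htT
  refine ⟨hint, hle.trans ?_⟩
  gcongr
  exact hM (mem_range_self (i, j))

/-- The transition density `p_t` is `C²`, its second partial derivatives are integrable,
and `‖∂²p_t/∂x_i∂x_j‖_{L¹} ≤ C t^{-2/α}` uniformly for `0 < t ≤ T`. -/
theorem stmt_6 (d : ℕ) (hd : 2 ≤ d) (α T : ℝ) (hα1 : 1 < α) (hα2 : α < 2) (hT : 0 < T) :
    (∀ t : ℝ, 0 < t → t ≤ T → ContDiff ℝ 2 (pdens d α t)) ∧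
    ∃ C : ℝ, ∀ t : ℝ, 0 < t → t ≤ T → ∀ i j : Fin d,
      Integrable (fun x : EuclideanSpace ℝ (Fin d) =>
        fderiv ℝ (fun z => fderiv ℝ (pdens d α t) z (EuclideanSpace.single i 1)) x
          (EuclideanSpace.single j 1)) ∧
      (∫ x : EuclideanSpace ℝ (Fin d),
          |fderiv ℝ (fun z => fderiv ℝ (pdens d α t) z (EuclideanSpace.single i 1)) x
            (EuclideanSpace.single j 1)|) ≤
        C * t ^ (-(2 / α)) :=
  stmt_6_general d (by lia) α T (by linarith) hα2
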